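/- arXiv:2308.03634 — 2 statements merged into one kernel-verified Lean document; each statement's English description precedes it below -/
import Mathlib

section
/- Let 𝕏 be a σ-finite measure space and ℳ, 𝒩 Banach L^0(𝕏)-modules. Define |α|_π := ⋀{ Σ_{i=1}^n |v_i||w_i| : n ∈ ℕ, α = Σ_{i=1}^n v_i ⊗ w_i } for α ∈ ℳ ⊗ 𝒩, the lattice infimum in L^0(𝕏) over all representations of α. Then |·|_π is a pointwise norm on ℳ ⊗ 𝒩 (i.e. |α|_π = 0 if and only if α = 0, |α+β|_π ≤ |α|_π + |β|_π, and |f·α|_π = |f||α|_π for every f ∈ L^0(𝕏)); moreover |v ⊗ w|_π = |v||w| for every v ∈ ℳ and w ∈ 𝒩. -/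
/-!
The ring `L⁰` enters only through the properties collected in `RegOrd`: it is a lattice-ordered ring
with multiplicative absolute value and nonnegative squares, it is von Neumann regular (divide by
`f` where `f ≠ 0`), and it is Dedekind complete (`L0.exists_glb`, by minimizing
`∫ arctan f` over countable infima against an equivalent finite measure).

Over such a ring the Hahn–Banach theorem holds for pointwise seminorms
(`IsPSeminorm.hahn_banach`): partial functionals extend by one vector because the admissible
values form an order interval, which is nonempty by completeness, and regularity reduces general
coefficients `f` to `1`. For a functional `ω` bounded by the pointwise norm, the slice
`v ⊗ w ↦ ω v • w` is bounded by the projective norm (`slice_le`). Choosing `ω v = |v|` gives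
`|v ⊗ w|_π = |v||w|`.

For definiteness, if `|α|_π = 0` then all slices of `α` vanish, and `sum_tmul_eq_zero` shows that
this forces `α = 0`, by induction on the length of a representation `∑ v i ⊗ w i`. Let `d` be the
distance of the last vector to the span `S` of the others. Where `d ≠ 0`, a functional vanishing
on `S` with value `d` at the last vector kills the last `w`; where `d = 0`, the last vector
lies in `S`, since finitely generated submodules are closed (`closedSub_span`), and the
representation can be shortened. Homogeneity follows from `|f • α|_π ≤ |f||α|_π` by regularity
(`IsPSeminorm.of_le`).
-/

open MeasureTheory Filter Set TensorProduct

noncomputable section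

namespace Paper

variable {X : Type*} [MeasurableSpace X]

/-- The space `L⁰(𝕏)` of real-valued measurable functions up to `μ`-a.e. equality. -/
abbrev L0 (μ : Measure X) : Type _ := X →ₘ[μ] ℝ

instance (μ : Measure X) : CommRing (L0 μ) :=
  { (inferInstance : AddCommGroup (L0 μ)), (inferInstance : CommMonoid (L0 μ)) with
    left_distrib := fun a b c => AEEqFun.toGerm_injective <| by
      simp only [AEEqFun.mul_toGerm, AEEqFun.add_toGerm, mul_add]
    right_distrib := fun a b c => AEEqFun.toGerm_injective <| by
      simp only [AEEqFun.mul_toGerm, AEEqFun.add_toGerm, add_mul]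
    zero_mul := fun a => AEEqFun.toGerm_injective <| by
      simp only [AEEqFun.mul_toGerm, AEEqFun.zero_toGerm, zero_mul]
    mul_zero := fun a => AEEqFun.toGerm_injective <| by
      simp only [AEEqFun.mul_toGerm, AEEqFun.zero_toGerm, mul_zero] }

/-- The distance on `L⁰(𝕏)` inducing the topology of convergence in measure, defined through
the auxiliary finite measure `μ.toFinite` (which satisfies `μ ≪ μ.toFinite ≪ μ`). -/
noncomputable def dL0 (μ : Measure X) [SFinite μ] (f g : L0 μ) : ℝ :=
  ∫ x, min |f x - g x| 1 ∂(μ.toFinite)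

/-- A Banach `L⁰(𝕏)`-module: a module over `L⁰(𝕏)` endowed with a pointwise norm, complete
with respect to the induced distance. -/
class BanachMod (μ : Measure X) [SFinite μ] (M : Type*) [AddCommGroup M]
    [Module (L0 μ) M] where
  pn : M → L0 μ
  pn_nonneg : ∀ v : M, 0 ≤ pn v
  pn_eq_zero : ∀ v : M, pn v = 0 ↔ v = 0
  pn_add_le : ∀ v w : M, pn (v + w) ≤ pn v + pn w
  pn_smul : ∀ (f : L0 μ) (v : M), pn (f • v) = |f| * pn v
  complete : ∀ u : ℕ → M,
    (∀ ε : ℝ, 0 < ε → ∃ N : ℕ, ∀ m ≥ N, ∀ n ≥ N, dL0 μ (pn (u m - u n)) 0 < ε) →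
    ∃ v : M, Tendsto (fun n => dL0 μ (pn (u n - v)) 0) atTop (nhds 0)

/-- The pointwise norm of a Banach `L⁰(𝕏)`-module, with the measure explicit. -/
noncomputable def pn (μ : Measure X) [SFinite μ] {M : Type*} [AddCommGroup M]
    [Module (L0 μ) M] [BanachMod μ M] (v : M) : L0 μ :=
  BanachMod.pn v

/-- The distance on a Banach `L⁰(𝕏)`-module. -/
noncomputable def dM (μ : Measure X) [SFinite μ] {M : Type*} [AddCommGroup M]
    [Module (L0 μ) M] [BanachMod μ M] (v w : M) : ℝ :=
  dL0 μ (pn μ (v - w)) 0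

section Defs

variable (μ : Measure X) [SFinite μ]
variable {M N : Type*} [AddCommGroup M] [Module (L0 μ) M] [BanachMod μ M]
  [AddCommGroup N] [Module (L0 μ) N] [BanachMod μ N]

/-- The set of admissible bounds of a map between Banach `L⁰(𝕏)`-modules; the pointwise norm
`|T|` of a homomorphism is the infimum of this set. -/
def homBddSet (T : M → N) : Set (L0 μ) :=
  {g | 0 ≤ g ∧ ∀ v, pn μ (T v) ≤ g * pn μ v}

/-- A homomorphism of Banach `L⁰(𝕏)`-modules: an `L⁰(𝕏)`-linear map admitting a bound
`g ∈ L⁰(𝕏)⁺` with `|T v| ≤ g |v|` (equivalently, `L⁰(𝕏)`-linear and continuous). -/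
def IsHom (T : M →ₗ[L0 μ] N) : Prop :=
  ∃ g, g ∈ homBddSet μ (⇑T)

/-- The set of admissible bounds of an `L⁰(𝕏)`-valued map (for elements of the dual module). -/
def dualBddSet (ω : M → L0 μ) : Set (L0 μ) :=
  {g | 0 ≤ g ∧ ∀ v, |ω v| ≤ g * pn μ v}

/-- Membership in the dual module `ℳ*`: an `L⁰(𝕏)`-linear map `ω : ℳ → L⁰(𝕏)` admitting a
bound `g ∈ L⁰(𝕏)⁺` with `|ω v| ≤ g |v|`. -/
def IsDual (ω : M →ₗ[L0 μ] L0 μ) : Prop :=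
  ∃ g, g ∈ dualBddSet μ (⇑ω)

/-- Membership in the unit disc `𝔻_{ℳ*}` of the dual module: `|ω| ≤ 1`, equivalently
`|ω v| ≤ |v|` for every `v`. -/
def InDualDisc (ω : M →ₗ[L0 μ] L0 μ) : Prop :=
  ∀ v, |ω v| ≤ pn μ v

/-- The family of pointwise norms `|s - ∑_{i ∈ F ∪ G} v i|` for `G` finite disjoint from `F`,
whose `F`-indexed inf-sup being `0` defines `s = ∑_{i∈I} v i`. -/
def sumUB {I : Type*} (v : I → M) (s : M) (F : Finset I) : Set (L0 μ) :=
  {g | ∃ G : Finset I, Disjoint G F ∧ g = pn μ (s - (∑ i ∈ F, v i + ∑ i ∈ G, v i))}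

/-- `HasSumMod μ v s` means that the family `{v_i}` is summable in the Banach `L⁰(𝕏)`-module
with sum `s`, i.e. `⋀_F ⋁_G |s - ∑_{i ∈ F ∪ G} v_i| = 0` (the inner suprema being the values
of `b`, and the outer infimum being `0`). -/
def HasSumMod {I : Type*} (v : I → M) (s : M) : Prop :=
  ∃ b : Finset I → L0 μ, (∀ F, IsLUB (sumUB μ v s F) (b F)) ∧ IsGLB (Set.range b) 0

/-- A family in a Banach `L⁰(𝕏)`-module is summable if it has a sum. -/
def SummableMod {I : Type*} (v : I → M) : Prop :=
  ∃ s, HasSumMod μ v s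

/-- The partial sums `∑_{i ∈ F} |v i|` of the pointwise norms of a family; the element `|v|₁`
of `ℓ₁(I, ℳ)` is the supremum of this set. -/
def l1PartialSums {I : Type*} (v : I → M) : Set (L0 μ) :=
  {g | ∃ F : Finset I, g = ∑ i ∈ F, pn μ (v i)}

/-- Membership in `ℓ₁(I, ℳ)`: the partial sums of the pointwise norms admit a supremum
(equivalently, an upper bound) in `L⁰(𝕏)`. -/
def Meml1 {I : Type*} (v : I → M) : Prop :=
  ∃ b, IsLUB (l1PartialSums μ v) b

/-- The partial sums `∑_{i ∈ F} |v i|` for an `L⁰(𝕏)`-valued family. -/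
def l1PartialSumsF {I : Type*} (v : I → L0 μ) : Set (L0 μ) :=
  {g | ∃ F : Finset I, g = ∑ i ∈ F, |v i|}

/-- Membership in `ℓ₁(I, L⁰(𝕏))`. -/
def Meml1F {I : Type*} (v : I → L0 μ) : Prop :=
  ∃ b, IsLUB (l1PartialSumsF μ v) b

/-- The set whose infimum defines the projective pointwise norm: all values
`∑_{i=1}^n |v_i||w_i|` over representations `α = ∑_{i=1}^n v_i ⊗ w_i`. -/
def piReps (α : M ⊗[L0 μ] N) : Set (L0 μ) :=
  {g | ∃ (n : ℕ) (v : Fin n → M) (w : Fin n → N),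
    α = ∑ i, v i ⊗ₜ[L0 μ] w i ∧ g = ∑ i, pn μ (v i) * pn μ (w i)}

/-- The set whose supremum defines the injective pointwise norm: all values
`|∑_{i=1}^n ω(v_i) η(w_i)|` over representations `α = ∑_{i=1}^n v_i ⊗ w_i` and elements
`ω ∈ 𝔻_{ℳ*}`, `η ∈ 𝔻_{𝒩*}`. -/
def epsReps (α : M ⊗[L0 μ] N) : Set (L0 μ) :=
  {g | ∃ (n : ℕ) (v : Fin n → M) (w : Fin n → N)
    (ω : M →ₗ[L0 μ] L0 μ) (η : N →ₗ[L0 μ] L0 μ), InDualDisc μ ω ∧ InDualDisc μ η ∧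
    α = ∑ i, v i ⊗ₜ[L0 μ] w i ∧ g = |∑ i, ω (v i) * η (w i)|}

/-- `IsPiTensor μ M N P e` states that the Banach `L⁰(𝕏)`-module `P`, together with the
`L⁰(𝕏)`-linear map `e` defined on the algebraic tensor product, realizes the projective
tensor product `ℳ ⊗̂_π 𝒩`: the pointwise norm of `e α` is the projective pointwise norm
`|α|_π` and the image of `e` is dense. -/
structure IsPiTensor (M N P : Type*) [AddCommGroup M] [Module (L0 μ) M] [BanachMod μ M]
    [AddCommGroup N] [Module (L0 μ) N] [BanachMod μ N]
    [AddCommGroup P] [Module (L0 μ) P] [BanachMod μ P]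
    (e : M ⊗[L0 μ] N →ₗ[L0 μ] P) : Prop where
  pn_emb : ∀ α : M ⊗[L0 μ] N, IsGLB (piReps μ α) (pn μ (e α))
  dense : ∀ p : P, ∀ ε : ℝ, 0 < ε → ∃ α : M ⊗[L0 μ] N, dM μ (e α) p < ε

/-- `IsEpsTensor μ M N P e` states that the Banach `L⁰(𝕏)`-module `P`, together with the
`L⁰(𝕏)`-linear map `e` defined on the algebraic tensor product, realizes the injective
tensor product `ℳ ⊗̂_ε 𝒩`: the pointwise norm of `e α` is the injective pointwise norm
`|α|_ε` and the image of `e` is dense. -/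
structure IsEpsTensor (M N P : Type*) [AddCommGroup M] [Module (L0 μ) M] [BanachMod μ M]
    [AddCommGroup N] [Module (L0 μ) N] [BanachMod μ N]
    [AddCommGroup P] [Module (L0 μ) P] [BanachMod μ P]
    (e : M ⊗[L0 μ] N →ₗ[L0 μ] P) : Prop where
  pn_emb : ∀ α : M ⊗[L0 μ] N, IsLUB (epsReps μ α) (pn μ (e α))
  dense : ∀ p : P, ∀ ε : ℝ, 0 < ε → ∃ α : M ⊗[L0 μ] N, dM μ (e α) p < ε

end Defs

/-! ### Regular, Dedekind complete, lattice-ordered rings -/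

/-- The algebraic and order properties of `L⁰` used in the proof: a lattice-ordered commutative
ring with multiplicative absolute value and nonnegative squares, von Neumann regular, in which
every nonempty set of nonnegative elements has an infimum. -/
class RegOrd (R : Type*) [CommRing R] [Lattice R] : Prop extends IsOrderedRing R where
  abs_mul' : ∀ a b : R, |a * b| = |a| * |b|
  sq_nonneg' : ∀ a : R, 0 ≤ a * a
  regular : ∀ f : R, ∃ g : R, f * g * f = f
  exists_glb : ∀ S : Set R, S.Nonempty → (∀ a ∈ S, 0 ≤ a) → ∃ b, IsGLB S b

section Abstract

variable {R : Type*} [CommRing R] [Lattice R] [RegOrd R]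
variable {M : Type*} [AddCommGroup M] [Module R M]
variable {N : Type*} [AddCommGroup N] [Module R N]

/-- Every `f` has a support idempotent `e` and a quasi-inverse `g`, that is `f * g = e`
and `e * f = f`. -/
lemma exists_supp (f : R) : ∃ g e : R, f * g = e ∧ e * f = f ∧ 0 ≤ e ∧ 0 ≤ 1 - e ∧
    |f| * |g| = e ∧ (1 - e) * f = 0 := by
  obtain ⟨g, hg⟩ := RegOrd.regular f
  have he : (f * g) * (f * g) = f * g := by rw [← mul_assoc, hg]
  have h0 : 0 ≤ f * g := by rw [← he]; exact RegOrd.sq_nonneg' _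
  have h1 : 0 ≤ 1 - f * g := by
    have : (1 - f * g) * (1 - f * g) = 1 - f * g := by linear_combination he
    rw [← this]; exact RegOrd.sq_nonneg' _
  refine ⟨g, f * g, rfl, hg, h0, h1, ?_, by linear_combination -hg⟩
  rw [← RegOrd.abs_mul', abs_of_nonneg h0]

/-- The nontrivial half of `⋀ (c * S) = c * ⋀ S` for `c ≥ 0` and a set `S` of nonnegative
elements. -/
lemma le_mul_glb {S : Set R} {a c y : R} (hS : ∀ s ∈ S, 0 ≤ s) (ha : IsGLB S a) (hc : 0 ≤ c)
    (h : ∀ s ∈ S, y ≤ c * s) : y ≤ c * a := by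
  obtain ⟨g, e, hge, hec, he0, he1, habs, hk⟩ := exists_supp c
  rw [abs_of_nonneg hc] at habs
  have h1 : |g| * y ≤ a := by
    refine ha.2 fun s hs => ?_
    calc |g| * y ≤ |g| * (c * s) := mul_le_mul_of_nonneg_left (h s hs) (abs_nonneg g)
      _ = e * s := by rw [← habs]; ring
      _ ≤ e * s + (1 - e) * s := le_add_of_nonneg_right (mul_nonneg he1 (hS s hs))
      _ = s := by ring
  have h2 : e * y ≤ c * a := by
    calc e * y = c * (|g| * y) := by rw [← habs]; ring
      _ ≤ c * a := mul_le_mul_of_nonneg_left h1 hc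
  by_cases hne : S.Nonempty
  · obtain ⟨s, hs⟩ := hne
    have h3 : (1 - e) * y ≤ 0 := by
      calc (1 - e) * y ≤ (1 - e) * (c * s) := mul_le_mul_of_nonneg_left (h s hs) he1
        _ = 0 := by rw [← mul_assoc, hk, zero_mul]
    calc y = e * y + (1 - e) * y := by ring
      _ ≤ c * a + 0 := add_le_add h2 h3
      _ = c * a := add_zero _
  ·
    -- The empty set has no infimum unless the ring is trivial.
    rw [Set.not_nonempty_iff_eq_empty] at hne
    subst hne
    have : a + 1 ≤ a := ha.2 (by simp)
    have h10 : (1 : R) ≤ 0 := by simpa using this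
    have h01 : (1 : R) = 0 := le_antisymm h10 zero_le_one
    have hz : ∀ z : R, z = 0 := fun z => by rw [← mul_one z, h01, mul_zero]
    rw [hz y, hz (c * a)]

/-- A nonempty set bounded below has an infimum. -/
lemma exists_glb_of_bddBelow (S : Set R) (hne : S.Nonempty) (l : R) (hl : ∀ a ∈ S, l ≤ a) :
    ∃ b, IsGLB S b := by
  obtain ⟨b, hb⟩ := RegOrd.exists_glb ((fun a => a - l) '' S) (hne.image _) (by
    rintro _ ⟨a, ha, rfl⟩; exact sub_nonneg.2 (hl a ha))
  refine ⟨b + l, fun a ha => ?_, fun c hc => ?_⟩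
  · exact le_sub_iff_add_le.1 (hb.1 ⟨a, ha, rfl⟩)
  · rw [← sub_le_iff_le_add]
    refine hb.2 ?_
    rintro _ ⟨a, ha, rfl⟩
    exact sub_le_sub_right (hc ha) l

/-- A pointwise seminorm: a pointwise norm without the condition that only `0` has norm `0`. -/
structure IsPSeminorm (p : M → R) : Prop where
  nonneg : ∀ x, 0 ≤ p x
  add_le : ∀ x y, p (x + y) ≤ p x + p y
  smul : ∀ (f : R) x, p (f • x) = |f| * p x

/-- Over a regular ring, the inequality `p (f • x) ≤ |f| * p x` already implies equality. -/
lemma IsPSeminorm.of_le {p : M → R} (h0 : ∀ x, 0 ≤ p x) (ha : ∀ x y, p (x + y) ≤ p x + p y)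
    (hs : ∀ (f : R) x, p (f • x) ≤ |f| * p x) : IsPSeminorm p := by
  refine ⟨h0, ha, fun f x => le_antisymm (hs f x) ?_⟩
  obtain ⟨g, e, hge, hec, he0, he1, habs, hk⟩ := exists_supp f
  have hx : x = g • f • x + (1 - e) • x := by
    rw [smul_smul, mul_comm, hge, ← add_smul, add_sub_cancel, one_smul]
  have h1 : |f| * |1 - e| = 0 := by
    rw [← RegOrd.abs_mul', mul_comm, hk, abs_zero]
  calc |f| * p x ≤ |f| * (|g| * p (f • x) + |1 - e| * p x) := by
        refine mul_le_mul_of_nonneg_left ?_ (abs_nonneg f)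
        calc p x = p (g • f • x + (1 - e) • x) := by rw [← hx]
          _ ≤ _ := (ha _ _).trans (add_le_add (hs _ _) (hs _ _))
    _ = e * p (f • x) := by linear_combination p (f • x) * habs + p x * h1
    _ ≤ e * p (f • x) + (1 - e) * p (f • x) := le_add_of_nonneg_right (mul_nonneg he1 (h0 _))
    _ = p (f • x) := by ring

namespace IsPSeminorm

variable {p : M → R} (hp : IsPSeminorm p)
include hp

lemma map_zero : p 0 = 0 := by
  have := hp.smul 0 0
  simpa using this

lemma map_neg (x : M) : p (-x) = p x := by
  have := hp.smul (-1) x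
  rwa [abs_neg, abs_of_nonneg zero_le_one, one_mul, neg_one_smul] at this

lemma sub_le (x y : M) : p (x - y) ≤ p x + p y := by
  rw [sub_eq_add_neg, ← hp.map_neg y]; exact hp.add_le _ _

/-- **Hahn–Banach theorem** for modules over `R`. Zorn's lemma is applied to graphs of partially
defined functionals, encoded as submodules of `M × R`. -/
theorem hahn_banach (v : M) : ∃ ω : M →ₗ[R] R, (∀ x, |ω x| ≤ p x) ∧ ω v = p v := by
  let good : Set (Submodule R (M × R)) := {G | ∀ z ∈ G, |z.2| ≤ p z.1}
  have hbase : Submodule.span R {((v, p v) : M × R)} ∈ good := by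
    intro z hz
    obtain ⟨f, rfl⟩ := Submodule.mem_span_singleton.1 hz
    simp only [Prod.smul_mk, smul_eq_mul, RegOrd.abs_mul', hp.smul, abs_of_nonneg (hp.nonneg v)]
    exact le_rfl
  obtain ⟨G, hG0, hGmax⟩ := zorn_le_nonempty₀ good (by
    intro c hc hchain y hy
    refine ⟨sSup c, ?_, fun z hz => le_sSup hz⟩
    intro z hz
    obtain ⟨s, hs, hzs⟩ := (Submodule.mem_sSup_of_directed ⟨y, hy⟩ hchain.directedOn).1 hz
    exact hc hs z hzs) _ hbase
  have hG : ∀ z ∈ G, |z.2| ≤ p z.1 := hGmax.1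
  have htotal : ∀ x : M, ∃ c : R, (x, c) ∈ G := by
    intro x
    -- A value `c` at `x` is admissible as soon as `|z.2 + c| ≤ p (z.1 + x)` for all `z ∈ G`.
    have hbd : ∀ z ∈ G, ∀ z' ∈ G, -z'.2 - p (z'.1 + x) ≤ p (z.1 + x) - z.2 := by
      intro z hz z' hz'
      have h1 : z.2 - z'.2 ≤ p (z.1 - z'.1) :=
        (le_abs_self _).trans (hG _ (G.sub_mem hz hz'))
      have h2 : p (z.1 - z'.1) ≤ p (z.1 + x) + p (z'.1 + x) := by
        have := hp.sub_le (z.1 + x) (z'.1 + x)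
        rwa [add_sub_add_right_eq_sub] at this
      have h3 := h1.trans h2
      rw [← sub_nonneg] at h3 ⊢
      convert h3 using 1
      ring
    obtain ⟨c, hc⟩ := exists_glb_of_bddBelow ((fun z : M × R => p (z.1 + x) - z.2) '' G)
      ⟨_, 0, G.zero_mem, rfl⟩ (-(0 : M × R).2 - p ((0 : M × R).1 + x)) (by
        rintro _ ⟨z, hz, rfl⟩
        exact hbd z hz 0 G.zero_mem)
    have hc1 : ∀ z ∈ G, |z.2 + c| ≤ p (z.1 + x) := by
      intro z hz
      refine abs_le'.2 ⟨?_, ?_⟩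
      · have := hc.1 ⟨z, hz, rfl⟩
        rw [← sub_nonneg] at this ⊢
        convert this using 1
        ring
      · have : -z.2 - p (z.1 + x) ≤ c := hc.2 (by
          rintro _ ⟨z', hz', rfl⟩
          exact hbd z' hz' z hz)
        rw [← sub_nonneg] at this ⊢
        convert this using 1
        ring
    have hgood : G ⊔ Submodule.span R {((x, c) : M × R)} ∈ good := by
      intro y hy
      obtain ⟨z, hz, w, hw, rfl⟩ := Submodule.mem_sup.1 hy
      obtain ⟨f, rfl⟩ := Submodule.mem_span_singleton.1 hw
      -- On the support `e` of `f` divide by `f`; off the support the new vector is invisible.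
      obtain ⟨g, e, hge, hec, he0, he1, habs, hk⟩ := exists_supp f
      have h1 : |e * (z.2 + f * c)| ≤ e * p (z.1 + f • x) := by
        have h := hc1 (g • z) (G.smul_mem g hz)
        have h' := mul_le_mul_of_nonneg_left h (abs_nonneg f)
        rw [← RegOrd.abs_mul', ← hp.smul] at h'
        have e1 : f * ((g • z).2 + c) = e * (z.2 + f * c) := by
          simp only [Prod.smul_snd, smul_eq_mul]
          linear_combination z.2 * hge - c * hec
        have e2 : f • ((g • z).1 + x) = e • (z.1 + f • x) := by
          simp only [Prod.smul_fst, smul_add, smul_smul, hge, hec]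
        rwa [e1, e2, hp.smul, abs_of_nonneg he0] at h'
      have h2 : |(1 - e) * (z.2 + f * c)| ≤ (1 - e) * p (z.1 + f • x) := by
        have h' := mul_le_mul_of_nonneg_left (hG z hz) (abs_nonneg (1 - e))
        rw [← RegOrd.abs_mul', ← hp.smul] at h'
        have e1 : (1 - e) * z.2 = (1 - e) * (z.2 + f * c) := by linear_combination -c * hk
        have e2 : (1 - e) • z.1 = (1 - e) • (z.1 + f • x) := by
          rw [smul_add, smul_smul, hk, zero_smul, add_zero]
        rwa [e1, e2, hp.smul, abs_of_nonneg he1] at h'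
      change |z.2 + f * c| ≤ p (z.1 + f • x)
      calc |z.2 + f * c| = |e * (z.2 + f * c) + (1 - e) * (z.2 + f * c)| := by congr 1; ring
        _ ≤ _ := (abs_add_le _ _).trans (add_le_add h1 h2)
        _ = p (z.1 + f • x) := by ring
    have hle := hGmax.2 hgood le_sup_left
    exact ⟨c, hle (Submodule.mem_sup_right (Submodule.mem_span_singleton_self _))⟩
  have huniq : ∀ x c c', (x, c) ∈ G → (x, c') ∈ G → c = c' := by
    intro x c c' h h'
    have := hG _ (G.sub_mem h h')
    simp only [Prod.mk_sub_mk, sub_self, hp.map_zero] at this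
    have h0 := (le_abs_self _).trans this
    have h1 := (neg_le_abs _).trans this
    rw [neg_sub] at h1
    exact le_antisymm (sub_nonpos.1 h0) (sub_nonpos.1 h1)
  choose ω hω using htotal
  refine ⟨⟨⟨ω, fun x y => ?_⟩, fun f x => ?_⟩, fun x => hG _ (hω x), ?_⟩
  · exact huniq _ _ _ (hω _) (G.add_mem (hω x) (hω y))
  · exact huniq _ _ _ (hω _) (G.smul_mem f (hω x))
  · exact huniq _ _ _ (hω _) (hG0 (Submodule.mem_span_singleton_self _))

lemma exists_quot (S : Submodule R M) (x : M) :
    ∃ b, IsGLB ((fun s => p (x - s)) '' (S : Set M)) b :=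
  RegOrd.exists_glb _ ⟨_, 0, S.zero_mem, rfl⟩ (by rintro _ ⟨s, -, rfl⟩; exact hp.nonneg _)

end IsPSeminorm

/-! ### The quotient seminorm and closedness of finitely generated submodules -/

/-- The distance `⋀_{s ∈ S} p (x - s)` from `x` to the submodule `S`. -/
def quotSN {p : M → R} (hp : IsPSeminorm p) (S : Submodule R M) (x : M) : R :=
  (hp.exists_quot S x).choose

section Quot

variable {p : M → R} (hp : IsPSeminorm p) (S : Submodule R M)

lemma quotSN_isGLB (x : M) : IsGLB ((fun s => p (x - s)) '' (S : Set M)) (quotSN hp S x) :=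
  (hp.exists_quot S x).choose_spec

lemma quotSN_le_sub {s : M} (hs : s ∈ S) (x : M) : quotSN hp S x ≤ p (x - s) :=
  (quotSN_isGLB hp S x).1 ⟨s, hs, rfl⟩

lemma quotSN_le (x : M) : quotSN hp S x ≤ p x := by
  simpa using quotSN_le_sub hp S S.zero_mem x

lemma le_quotSN {x : M} {y : R} (h : ∀ s ∈ S, y ≤ p (x - s)) : y ≤ quotSN hp S x :=
  (quotSN_isGLB hp S x).2 (by rintro _ ⟨s, hs, rfl⟩; exact h s hs)

lemma quotSN_isPSeminorm : IsPSeminorm (quotSN hp S) := by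
  refine IsPSeminorm.of_le (fun x => le_quotSN hp S fun s _ => hp.nonneg _) (fun x y => ?_)
    fun f x => ?_
  · rw [← sub_le_iff_le_add]
    refine le_quotSN hp S fun s hs => ?_
    rw [sub_le_comm]
    refine le_quotSN hp S fun t ht => ?_
    rw [sub_le_iff_le_add]
    refine (quotSN_le_sub hp S (S.add_mem hs ht) (x + y)).trans ?_
    rw [add_sub_add_comm, add_comm (p (y - t))]
    exact hp.add_le _ _
  · refine le_mul_glb ?_ (quotSN_isGLB hp S x) (abs_nonneg f) ?_
    · rintro _ ⟨s, -, rfl⟩; exact hp.nonneg _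
    · rintro _ ⟨s, hs, rfl⟩
      refine (quotSN_le_sub hp S (S.smul_mem f hs) (f • x)).trans ?_
      rw [← smul_sub, hp.smul]

lemma quotSN_eq_zero {s : M} (hs : s ∈ S) : quotSN hp S s = 0 := by
  refine le_antisymm ?_ ((quotSN_isPSeminorm hp S).nonneg s)
  simpa [hp.map_zero] using quotSN_le_sub hp S hs s

/-- Order-closedness of a submodule: vectors at distance `0` belong to it. -/
def ClosedSub : Prop := ∀ x, quotSN hp S x = 0 → x ∈ S

/-- A functional bounded by `p` that vanishes on `S` and takes at `v` the value `dist(v, S)`. -/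
lemma exists_dual_quot (v : M) : ∃ ω : M →ₗ[R] R, (∀ x, |ω x| ≤ p x) ∧ (∀ s ∈ S, ω s = 0) ∧
    ω v = quotSN hp S v := by
  obtain ⟨ω, h1, h2⟩ := (quotSN_isPSeminorm hp S).hahn_banach v
  refine ⟨ω, fun x => (h1 x).trans (quotSN_le hp S x), fun s hs => ?_, h2⟩
  have := h1 s
  rw [quotSN_eq_zero hp S hs] at this
  exact le_antisymm ((le_abs_self _).trans this) (neg_nonpos.1 ((neg_le_abs _).trans this))

/-- Adding one generator preserves closedness. Off the support `e` of `dist(v, S)` the vector `v`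
already lies in `S`; on `e`, a functional vanishing on `S` recovers the coefficient of `v`. -/
lemma ClosedSub.sup_span {S : Submodule R M} (hS : ClosedSub hp S) (v : M) :
    ClosedSub hp (S ⊔ Submodule.span R {v}) := by
  intro x hx
  set S' := S ⊔ Submodule.span R {v} with hS'
  have hq := quotSN_isPSeminorm hp S
  obtain ⟨ω, hω, hωS, hωv⟩ := exists_dual_quot hp S v
  obtain ⟨g, e, hge, hec, he0, he1, habs, hk⟩ := exists_supp (quotSN hp S v)
  have hvS : (1 - e) • v ∈ S := hS _ (by rw [hq.smul, abs_of_nonneg he1, hk])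
  have h1 : (1 - e) • x ∈ S := by
    refine hS _ (le_antisymm ?_ (hq.nonneg _))
    rw [← hx]
    refine le_quotSN hp S' fun t ht => ?_
    obtain ⟨s, hs, w, hw, rfl⟩ := Submodule.mem_sup.1 ht
    obtain ⟨f, rfl⟩ := Submodule.mem_span_singleton.1 hw
    have hm : (1 - e) • (s + f • v) ∈ S := by
      rw [smul_add, smul_comm (1 - e) f v]
      exact S.add_mem (S.smul_mem _ hs) (S.smul_mem _ hvS)
    refine (quotSN_le_sub hp S hm _).trans ?_
    rw [← smul_sub, hp.smul, abs_of_nonneg he1]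
    calc _ ≤ (1 - e) * p (x - (s + f • v)) + e * p (x - (s + f • v)) :=
          le_add_of_nonneg_right (mul_nonneg he0 (hp.nonneg _))
      _ = _ := by ring
  have h2 : e • x - (g * ω x) • v ∈ S := by
    refine hS _ (le_antisymm ?_ (hq.nonneg _))
    rw [← mul_zero (1 + 1 : R), ← hx]
    refine le_mul_glb ?_ (quotSN_isGLB hp S' x) (add_nonneg zero_le_one zero_le_one) ?_
    · rintro _ ⟨s, -, rfl⟩; exact hp.nonneg _
    · rintro _ ⟨t, ht, rfl⟩
      obtain ⟨s, hs, w, hw, rfl⟩ := Submodule.mem_sup.1 ht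
      obtain ⟨f, rfl⟩ := Submodule.mem_span_singleton.1 hw
      set t := s + f • v with htdef
      have hωt : ω t = f * quotSN hp S v := by
        rw [htdef, _root_.map_add, hωS s hs, _root_.map_smul, hωv, zero_add, smul_eq_mul]
      have hdec : e • x - (g * ω x) • v = e • s + (e • (x - t) - (g * ω (x - t)) • v) := by
        have : g * ω (x - t) = g * ω x - e * f := by
          rw [_root_.map_sub, hωt, ← hge]; ring
        rw [this, htdef]
        module
      have hb1 : quotSN hp S (e • (x - t)) ≤ p (x - t) := by
        rw [hq.smul, abs_of_nonneg he0]
        calc e * quotSN hp S (x - t) ≤ e * p (x - t) :=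
              mul_le_mul_of_nonneg_left (quotSN_le hp S _) he0
          _ ≤ e * p (x - t) + (1 - e) * p (x - t) :=
              le_add_of_nonneg_right (mul_nonneg he1 (hp.nonneg _))
          _ = p (x - t) := by ring
      have hb2 : quotSN hp S ((g * ω (x - t)) • v) ≤ p (x - t) := by
        have habs' : |quotSN hp S v| = quotSN hp S v := abs_of_nonneg (hq.nonneg v)
        rw [habs'] at habs
        rw [hq.smul, RegOrd.abs_mul']
        calc |g| * |ω (x - t)| * quotSN hp S v = e * |ω (x - t)| := by rw [← habs]; ring
          _ ≤ e * p (x - t) := mul_le_mul_of_nonneg_left (hω _) he0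
          _ ≤ e * p (x - t) + (1 - e) * p (x - t) :=
              le_add_of_nonneg_right (mul_nonneg he1 (hp.nonneg _))
          _ = p (x - t) := by ring
      rw [hdec]
      calc _ ≤ quotSN hp S (e • s) + quotSN hp S (e • (x - t) - (g * ω (x - t)) • v) :=
            hq.add_le _ _
        _ ≤ 0 + (p (x - t) + p (x - t)) := by
            refine add_le_add (quotSN_eq_zero hp S (S.smul_mem e hs)).le ?_
            exact (hq.sub_le _ _).trans (add_le_add hb1 hb2)
        _ = (1 + 1) * p (x - t) := by ring
  have hx' : x = (1 - e) • x + (e • x - (g * ω x) • v) + (g * ω x) • v := by module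
  rw [hx']
  exact S'.add_mem (S'.add_mem (Submodule.mem_sup_left h1) (Submodule.mem_sup_left h2))
    (Submodule.mem_sup_right (Submodule.smul_mem _ _ (Submodule.mem_span_singleton_self v)))

/-- Finitely generated submodules are closed. -/
lemma closedSub_span (hp0 : ∀ x, p x = 0 → x = 0) {s : Set M} (hs : s.Finite) :
    ClosedSub hp (Submodule.span R s) := by
  induction s, hs using Set.Finite.induction_on with
  | empty =>
    intro x hx
    rw [Submodule.span_empty, Submodule.mem_bot]
    refine hp0 x (le_antisymm ?_ (hp.nonneg x))
    rw [← hx]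
    refine le_quotSN hp _ fun t ht => ?_
    rw [Submodule.span_empty, Submodule.mem_bot] at ht
    rw [ht, sub_zero]
  | insert _ _ ih =>
    rw [Submodule.span_insert, sup_comm]
    exact ih.sup_span hp _

end Quot

/-! ### Slicing tensors by functionals -/

/-- The slice map `M ⊗ N → N`, `v ⊗ w ↦ ω v • w`. -/
def slice (ω : M →ₗ[R] R) : M ⊗[R] N →ₗ[R] N :=
  (TensorProduct.lid R N).toLinearMap ∘ₗ ω.rTensor N

omit [Lattice R] [RegOrd R] in
lemma slice_tmul (ω : M →ₗ[R] R) (v : M) (w : N) : slice ω (v ⊗ₜ[R] w) = ω v • w := by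
  simp [slice]

/-- Bounded functionals on the first factor separate the points of the tensor product. In the
inductive step the last vector is expressed through the others wherever it depends on them, and
elsewhere its partner `w` is forced to vanish by a functional killing the other vectors. -/
theorem sum_tmul_eq_zero {p : M → R} (hp : IsPSeminorm p) (hp0 : ∀ x, p x = 0 → x = 0) :
    ∀ (n : ℕ) (v : Fin n → M) (w : Fin n → N),
      (∀ ω : M →ₗ[R] R, (∀ x, |ω x| ≤ p x) → slice ω (∑ i, v i ⊗ₜ[R] w i) = 0) →
      ∑ i, v i ⊗ₜ[R] w i = 0 := by
  intro n
  induction n with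
  | zero => intro v w _; simp
  | succ n ih =>
    intro v w h
    let S := Submodule.span R (Set.range fun i : Fin n => v i.castSucc)
    have hS : ClosedSub hp S := closedSub_span hp hp0 (Set.finite_range _)
    have hq := quotSN_isPSeminorm hp S
    obtain ⟨g, e, hge, hec, he0, he1, habs, hk⟩ := exists_supp (quotSN hp S (v (Fin.last n)))
    have hvS : (1 - e) • v (Fin.last n) ∈ S := hS _ (by rw [hq.smul, abs_of_nonneg he1, hk])
    obtain ⟨ω, hω, hωS, hωv⟩ := exists_dual_quot hp S (v (Fin.last n))
    have hw : e • w (Fin.last n) = 0 := by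
      have h0 := h ω hω
      rw [_root_.map_sum, Fin.sum_univ_castSucc] at h0
      simp only [slice_tmul] at h0
      rw [Finset.sum_eq_zero, zero_add, hωv] at h0
      · rw [← hge, mul_comm, mul_smul, h0, smul_zero]
      · intro i _
        rw [hωS _ (Submodule.subset_span ⟨i, rfl⟩), zero_smul]
    obtain ⟨c, hc⟩ := (Submodule.mem_span_range_iff_exists_fun R).1 hvS
    have hlast : v (Fin.last n) ⊗ₜ[R] w (Fin.last n) =
        ∑ i : Fin n, v i.castSucc ⊗ₜ[R] (c i • w (Fin.last n)) := by
      have hw' : w (Fin.last n) = (1 - e) • w (Fin.last n) := by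
        rw [sub_smul, hw, one_smul, sub_zero]
      conv_lhs => rw [hw', ← TensorProduct.smul_tmul, ← hc, TensorProduct.sum_tmul]
      exact Finset.sum_congr rfl fun i _ => TensorProduct.smul_tmul _ _ _
    have hsum : ∑ i, v i ⊗ₜ[R] w i =
        ∑ i : Fin n, v i.castSucc ⊗ₜ[R] (w i.castSucc + c i • w (Fin.last n)) := by
      rw [Fin.sum_univ_castSucc, hlast, ← Finset.sum_add_distrib]
      simp only [TensorProduct.tmul_add]
    rw [hsum] at h ⊢
    exact ih _ _ h

/-! ### The projective pointwise norm -/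

/-- The values `∑ p (v i) * q (w i)` over all representations `α = ∑ v i ⊗ w i`. -/
def reps (p : M → R) (q : N → R) (α : M ⊗[R] N) : Set R :=
  {g | ∃ (n : ℕ) (v : Fin n → M) (w : Fin n → N),
    α = ∑ i, v i ⊗ₜ[R] w i ∧ g = ∑ i, p (v i) * q (w i)}

omit [Lattice R] [RegOrd R] in
lemma exists_rep (α : M ⊗[R] N) :
    ∃ (n : ℕ) (v : Fin n → M) (w : Fin n → N), α = ∑ i, v i ⊗ₜ[R] w i := by
  induction α using TensorProduct.induction_on with
  | zero => exact ⟨0, ![], ![], by simp⟩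
  | tmul x y => exact ⟨1, ![x], ![y], by simp⟩
  | add a b ha hb =>
    obtain ⟨n, v, w, rfl⟩ := ha
    obtain ⟨m, v', w', rfl⟩ := hb
    exact ⟨n + m, Fin.append v v', Fin.append w w', by simp [Fin.sum_univ_add]⟩

omit [Lattice R] [RegOrd R] in
lemma reps_add {p : M → R} {q : N → R} {α β : M ⊗[R] N} {a b : R} (ha : a ∈ reps p q α)
    (hb : b ∈ reps p q β) : a + b ∈ reps p q (α + β) := by
  obtain ⟨n, v, w, rfl, rfl⟩ := ha
  obtain ⟨m, v', w', rfl, rfl⟩ := hb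
  exact ⟨n + m, Fin.append v v', Fin.append w w', by simp [Fin.sum_univ_add],
    by simp [Fin.sum_univ_add]⟩

section Reps

variable {p : M → R} {q : N → R} (hp : IsPSeminorm p) (hq : IsPSeminorm q)
include hp

omit [RegOrd R] in
lemma reps_smul (f : R) {α : M ⊗[R] N} {a : R} (ha : a ∈ reps p q α) :
    |f| * a ∈ reps p q (f • α) := by
  obtain ⟨n, v, w, rfl, rfl⟩ := ha
  refine ⟨n, fun i => f • v i, w, ?_, ?_⟩
  · rw [Finset.smul_sum]; rfl
  · simp only [hp.smul, Finset.mul_sum, mul_assoc]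

include hq

lemma reps_nonneg {α : M ⊗[R] N} : ∀ a ∈ reps p q α, 0 ≤ a := by
  rintro _ ⟨n, v, w, -, rfl⟩
  exact Finset.sum_nonneg fun i _ => mul_nonneg (hp.nonneg _) (hq.nonneg _)

lemma reps_exists_glb (α : M ⊗[R] N) : ∃ b, IsGLB (reps p q α) b := by
  obtain ⟨n, v, w, h⟩ := exists_rep α
  exact RegOrd.exists_glb _ ⟨_, n, v, w, h, rfl⟩ (reps_nonneg hp hq)

omit hp hq in
lemma reps_glb_add {α β : M ⊗[R] N} {a b c : R} (ha : IsGLB (reps p q α) a)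
    (hb : IsGLB (reps p q β) b) (hc : IsGLB (reps p q (α + β)) c) : c ≤ a + b := by
  rw [← sub_le_iff_le_add]
  refine ha.2 fun x hx => ?_
  rw [sub_le_comm]
  refine hb.2 fun y hy => ?_
  rw [sub_le_iff_le_add, add_comm]
  exact hc.1 (reps_add hx hy)

lemma reps_glb_smul (f : R) {α : M ⊗[R] N} {a c : R} (ha : IsGLB (reps p q α) a)
    (hc : IsGLB (reps p q (f • α)) c) : c = |f| * a := by
  choose π hπ using reps_exists_glb hp hq (R := R)
  have hsn : IsPSeminorm π := by
    refine IsPSeminorm.of_le (fun α => (hπ α).2 (reps_nonneg hp hq))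
      (fun α β => reps_glb_add (hπ α) (hπ β) (hπ _)) fun f α => ?_
    exact le_mul_glb (reps_nonneg hp hq) (hπ α) (abs_nonneg f) fun s hs =>
      (hπ _).1 (reps_smul hp f hs)
  rw [ha.unique (hπ α), hc.unique (hπ _), hsn.smul]

omit hp in
/-- Slicing by a functional bounded by `p` is bounded by the projective pointwise norm. -/
lemma slice_le {α : M ⊗[R] N} {b : R} (hb : IsGLB (reps p q α) b) (ω : M →ₗ[R] R)
    (hω : ∀ x, |ω x| ≤ p x) : q (slice ω α) ≤ b := by
  refine hb.2 ?_
  rintro _ ⟨n, v, w, rfl, rfl⟩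
  rw [_root_.map_sum]
  refine (Finset.le_sum_of_subadditive q hq.map_zero.le hq.add_le _ _).trans ?_
  refine Finset.sum_le_sum fun i _ => ?_
  rw [slice_tmul, hq.smul]
  exact mul_le_mul_of_nonneg_right (hω _) (hq.nonneg _)

lemma reps_glb_eq_zero (hp0 : ∀ x, p x = 0 → x = 0) (hq0 : ∀ x, q x = 0 → x = 0)
    {α : M ⊗[R] N} {b : R} (hb : IsGLB (reps p q α) b) : b = 0 ↔ α = 0 := by
  constructor
  · rintro rfl
    obtain ⟨n, v, w, rfl⟩ := exists_rep α
    exact sum_tmul_eq_zero hp hp0 n v w fun ω hω =>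
      hq0 _ (le_antisymm (slice_le hq hb ω hω) (hq.nonneg _))
  · rintro rfl
    exact le_antisymm (hb.1 ⟨0, ![], ![], by simp, by simp⟩) (hb.2 (reps_nonneg hp hq))

lemma reps_glb_tmul {v : M} {w : N} {b : R} (hb : IsGLB (reps p q (v ⊗ₜ[R] w)) b) :
    b = p v * q w := by
  refine le_antisymm (hb.1 ⟨1, ![v], ![w], by simp, by simp⟩) ?_
  obtain ⟨ω, hω, hωv⟩ := hp.hahn_banach v
  have := slice_le hq hb ω hω
  rwa [slice_tmul, hq.smul, hωv, abs_of_nonneg (hp.nonneg v)] at this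

end Reps

end Abstract

/-! ### The ring `L⁰` -/

section Concrete

variable (μ : Measure X)

instance L0.isOrderedRing : IsOrderedRing (L0 μ) where
  add_le_add_left a b h c := by
    rw [← AEEqFun.coeFn_le] at h ⊢
    filter_upwards [h, AEEqFun.coeFn_add a c, AEEqFun.coeFn_add b c] with x h h1 h2
    have h1' : (a + c) x = a x + c x := h1
    have h2' : (b + c) x = b x + c x := h2
    rw [h1', h2']
    exact add_le_add_left h _
  zero_le_one := by
    rw [← AEEqFun.coeFn_le]
    filter_upwards [AEEqFun.coeFn_zero (μ := μ) (β := ℝ), AEEqFun.coeFn_one (μ := μ) (β := ℝ)]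
      with x h0 h1
    rw [h0, h1]
    exact zero_le_one
  mul_le_mul_of_nonneg_left c hc a b h := by
    have hc' : (0 : L0 μ) ≤ c := hc
    have h' : a ≤ b := h
    rw [← AEEqFun.coeFn_le] at h' hc'
    change c * a ≤ c * b
    rw [← AEEqFun.coeFn_le]
    filter_upwards [h', hc', AEEqFun.coeFn_zero (μ := μ) (β := ℝ), AEEqFun.coeFn_mul c a,
      AEEqFun.coeFn_mul c b] with x h hc h0 h1 h2
    rw [h1, h2]
    rw [h0] at hc
    exact mul_le_mul_of_nonneg_left h hc
  mul_le_mul_of_nonneg_right c hc a b h := by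
    have hc' : (0 : L0 μ) ≤ c := hc
    have h' : a ≤ b := h
    rw [← AEEqFun.coeFn_le] at h' hc'
    change a * c ≤ b * c
    rw [← AEEqFun.coeFn_le]
    filter_upwards [h', hc', AEEqFun.coeFn_zero (μ := μ) (β := ℝ), AEEqFun.coeFn_mul a c,
      AEEqFun.coeFn_mul b c] with x h hc h0 h1 h2
    rw [h1, h2]
    rw [h0] at hc
    exact mul_le_mul_of_nonneg_right h hc

lemma L0.abs_mul (a b : L0 μ) : |a * b| = |a| * |b| := by
  refine AEEqFun.ext ?_
  filter_upwards [AEEqFun.coeFn_abs (a * b), AEEqFun.coeFn_mul a b, AEEqFun.coeFn_mul |a| |b|,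
    AEEqFun.coeFn_abs a, AEEqFun.coeFn_abs b] with x h1 h2 h3 h4 h5
  rw [h1, h2, h3, Pi.mul_apply, Pi.mul_apply, h4, h5]
  exact _root_.abs_mul _ _

lemma L0.sq_nonneg (a : L0 μ) : 0 ≤ a * a := by
  rw [← AEEqFun.coeFn_le]
  filter_upwards [AEEqFun.coeFn_mul a a, AEEqFun.coeFn_zero (μ := μ) (β := ℝ)] with x h1 h2
  rw [h1, h2]
  exact mul_self_nonneg (a x)

/-- The quasi-inverse is the pointwise inverse, with `0⁻¹ = 0`. -/
lemma L0.regular (f : L0 μ) : ∃ g : L0 μ, f * g * f = f := by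
  refine ⟨AEEqFun.compMeasurable (fun t : ℝ => t⁻¹) measurable_inv f, AEEqFun.ext ?_⟩
  set g := AEEqFun.compMeasurable (fun t : ℝ => t⁻¹) measurable_inv f with hg
  filter_upwards [AEEqFun.coeFn_mul (f * g) f, AEEqFun.coeFn_mul f g,
    AEEqFun.coeFn_compMeasurable (fun t : ℝ => t⁻¹) measurable_inv f] with x h1 h2 h3
  rw [h1, Pi.mul_apply, h2, Pi.mul_apply, hg, h3, Function.comp_apply]
  exact mul_inv_mul_cancel (f x)

/-- Countable infima of nonnegative functions are computed pointwise. -/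
lemma L0.exists_glb_seq (u : ℕ → L0 μ) (hu : ∀ n, 0 ≤ u n) : ∃ g, IsGLB (Set.range u) g := by
  have hm : AEMeasurable (fun x => ⨅ n, u n x) μ := AEMeasurable.iInf fun n => (u n).aemeasurable
  have hu' : ∀ᵐ x ∂μ, ∀ n, 0 ≤ u n x := by
    rw [ae_all_iff]
    intro n
    filter_upwards [(AEEqFun.coeFn_le (f := 0) (g := u n)).2 (hu n),
      AEEqFun.coeFn_zero (μ := μ) (β := ℝ)] with x h h0
    rwa [h0] at h
  refine ⟨AEEqFun.mk _ hm.aestronglyMeasurable, ?_, ?_⟩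
  · rintro _ ⟨n, rfl⟩
    rw [← AEEqFun.coeFn_le]
    filter_upwards [AEEqFun.coeFn_mk _ hm.aestronglyMeasurable, hu'] with x h1 h2
    rw [h1]
    exact ciInf_le ⟨0, by rintro _ ⟨k, rfl⟩; exact h2 k⟩ n
  · intro c hc
    have hc' : ∀ᵐ x ∂μ, ∀ n, c x ≤ u n x := by
      rw [ae_all_iff]
      intro n
      exact (AEEqFun.coeFn_le (f := c) (g := u n)).2 (hc ⟨n, rfl⟩)
    rw [← AEEqFun.coeFn_le]
    filter_upwards [AEEqFun.coeFn_mk _ hm.aestronglyMeasurable, hc'] with x h1 h2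
    rw [h1]
    exact le_ciInf h2

variable [SFinite μ]

/-- A bounded, strictly increasing functional on `L⁰`. -/
def L0.weight (f : L0 μ) : ℝ := ∫ x, Real.arctan (f x) ∂μ.toFinite

lemma L0.integrable_arctan (f : L0 μ) :
    Integrable (fun x => Real.arctan (f x)) μ.toFinite := by
  refine Integrable.of_bound (C := Real.pi / 2) ?_ (ae_of_all _ fun x => ?_)
  · exact (Real.continuous_arctan.comp_aestronglyMeasurable f.aestronglyMeasurable).mono_ac
      (toFinite_absolutelyContinuous μ)
  · rw [Real.norm_eq_abs, abs_le]
    exact ⟨(Real.neg_pi_div_two_lt_arctan _).le, (Real.arctan_lt_pi_div_two _).le⟩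

lemma L0.ae_arctan_le {f g : L0 μ} (h : f ≤ g) :
    (fun x => Real.arctan (f x)) ≤ᵐ[μ.toFinite] fun x => Real.arctan (g x) := by
  have h' := (AEEqFun.coeFn_le (f := f) (g := g)).2 h
  rw [Filter.EventuallyLE, ae_toFinite]
  filter_upwards [h'] with x hx
  exact Real.arctan_mono hx

lemma L0.weight_mono {f g : L0 μ} (h : f ≤ g) : L0.weight μ f ≤ L0.weight μ g :=
  integral_mono_ae (L0.integrable_arctan μ f) (L0.integrable_arctan μ g) (L0.ae_arctan_le μ h)

lemma L0.eq_of_weight {f g : L0 μ} (h : f ≤ g) (hw : L0.weight μ f = L0.weight μ g) :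
    f = g := by
  have h' := (integral_eq_iff_of_ae_le (L0.integrable_arctan μ f) (L0.integrable_arctan μ g)
    (L0.ae_arctan_le μ h)).1 hw
  rw [Filter.EventuallyEq, ae_toFinite] at h'
  refine AEEqFun.ext ?_
  filter_upwards [h'] with x hx
  exact Real.arctan_injective hx

/-- Dedekind completeness of `L⁰`: among the infima of countable subfamilies one has minimal
weight, and it is a lower bound of the whole set. -/
lemma L0.exists_glb (S : Set (L0 μ)) (hne : S.Nonempty) (hS : ∀ a ∈ S, 0 ≤ a) :
    ∃ b, IsGLB S b := by
  obtain ⟨s0, hs0⟩ := hne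
  have hex : ∀ u : ℕ → S, ∃ g, IsGLB (Set.range fun n => (u n : L0 μ)) g := fun u =>
    L0.exists_glb_seq μ _ fun n => hS _ (u n).2
  choose G hG using hex
  have hGpos : ∀ u, 0 ≤ G u := fun u => (hG u).2 (by rintro _ ⟨n, rfl⟩; exact hS _ (u n).2)
  set W : Set ℝ := Set.range fun u => L0.weight μ (G u) with hW
  have hWne : W.Nonempty := ⟨_, fun _ => ⟨s0, hs0⟩, rfl⟩
  have hWbdd : BddBelow W := ⟨L0.weight μ 0, by
    rintro _ ⟨u, rfl⟩; exact L0.weight_mono μ (hGpos u)⟩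
  have hseq : ∀ k : ℕ, ∃ u, L0.weight μ (G u) < sInf W + 1 / ((k : ℝ) + 1) := by
    intro k
    obtain ⟨_, ⟨u, rfl⟩, h⟩ := exists_lt_of_csInf_lt hWne
      (lt_add_of_pos_right (sInf W) (Nat.one_div_pos_of_nat (α := ℝ) (n := k)))
    exact ⟨u, h⟩
  choose U hU using hseq
  let V : ℕ → S := fun n => U n.unpair.1 n.unpair.2
  have hVle : ∀ k, G V ≤ G (U k) := by
    intro k
    refine (hG (U k)).2 ?_
    rintro _ ⟨n, rfl⟩
    exact (hG V).1 ⟨Nat.pair k n, by simp [V]⟩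
  have hVmin : L0.weight μ (G V) ≤ sInf W := by
    refine le_of_forall_pos_lt_add fun ε hε => ?_
    obtain ⟨k, hk⟩ := exists_nat_one_div_lt hε
    exact (L0.weight_mono μ (hVle k)).trans_lt ((hU k).trans (by linarith))
  refine ⟨G V, fun s hs => ?_, fun c hc => (hG V).2 ?_⟩
  ·
    -- Adjoining `s` to the minimizing family cannot lower the weight.
    let V' : ℕ → S := fun n => Nat.casesOn n ⟨s, hs⟩ V
    have h1 : G V' ≤ G V := by
      refine (hG V).2 ?_
      rintro _ ⟨n, rfl⟩
      exact (hG V').1 ⟨n + 1, rfl⟩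
    have h2 : L0.weight μ (G V) ≤ L0.weight μ (G V') := hVmin.trans (csInf_le hWbdd ⟨V', rfl⟩)
    have h3 := L0.eq_of_weight μ h1 (le_antisymm (L0.weight_mono μ h1) h2)
    rw [← h3]
    exact (hG V').1 ⟨0, rfl⟩
  · rintro _ ⟨n, rfl⟩
    exact hc (V n).2

instance L0.regOrd : RegOrd (L0 μ) where
  abs_mul' := L0.abs_mul μ
  sq_nonneg' := L0.sq_nonneg μ
  regular := L0.regular μ
  exists_glb := L0.exists_glb μ

lemma pn_isPSeminorm (M : Type*) [AddCommGroup M] [Module (L0 μ) M] [BanachMod μ M] :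
    IsPSeminorm (pn μ : M → L0 μ) where
  nonneg := BanachMod.pn_nonneg
  add_le := BanachMod.pn_add_le
  smul := BanachMod.pn_smul

end Concrete

/-- Let `𝕏` be a σ-finite measure space and `ℳ`, `𝒩` Banach
`L⁰(𝕏)`-modules. The projective pointwise norm `|α|_π := ⋀ { ∑_{i=1}^n |v_i||w_i| :
α = ∑_{i=1}^n v_i ⊗ w_i }` (the infimum over all representations, which exists) is a
pointwise norm on `ℳ ⊗ 𝒩`, and `|v ⊗ w|_π = |v||w|`. -/
theorem projective_pointwise_norm
    (μ : Measure X) [SigmaFinite μ]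
    (M : Type*) [AddCommGroup M] [Module (L0 μ) M] [BanachMod μ M]
    (N : Type*) [AddCommGroup N] [Module (L0 μ) N] [BanachMod μ N]
    :
    -- existence of the infimum
    (∀ α : M ⊗[L0 μ] N, ∃ b : L0 μ, IsGLB (piReps μ α) b)
    -- nonnegativity
    ∧ (∀ (α : M ⊗[L0 μ] N) (b : L0 μ), IsGLB (piReps μ α) b → 0 ≤ b)
    -- `|α|_π = 0` iff `α = 0`
    ∧ (∀ (α : M ⊗[L0 μ] N) (b : L0 μ), IsGLB (piReps μ α) b → (b = 0 ↔ α = 0))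
    -- subadditivity
    ∧ (∀ (α β : M ⊗[L0 μ] N) (a b c : L0 μ), IsGLB (piReps μ α) a → IsGLB (piReps μ β) b →
        IsGLB (piReps μ (α + β)) c → c ≤ a + b)
    -- homogeneity
    ∧ (∀ (f : L0 μ) (α : M ⊗[L0 μ] N) (a c : L0 μ), IsGLB (piReps μ α) a →
        IsGLB (piReps μ (f • α)) c → c = |f| * a)
    -- value on elementary tensors
    ∧ (∀ (v : M) (w : N) (b : L0 μ), IsGLB (piReps μ (v ⊗ₜ[L0 μ] w)) b →
        b = pn μ v * pn μ w) := by
  have hM := pn_isPSeminorm μ M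
  have hN := pn_isPSeminorm μ N
  refine ⟨fun α => reps_exists_glb hM hN α, fun α b hb => hb.2 (reps_nonneg hM hN),
    fun α b hb => reps_glb_eq_zero hM hN (fun x => (BanachMod.pn_eq_zero x).1)
      (fun x => (BanachMod.pn_eq_zero x).1) hb,
    fun α β a b c ha hb hc => reps_glb_add ha hb hc,
    fun f α a c ha hc => reps_glb_smul hM hN f ha hc,
    fun v w b hb => reps_glb_tmul hM hN hb⟩

end Paper
end
end

section
/- Let 𝕏 be a σ-finite measure space and T : ℳ → ℳ̃, S : 𝒩 → 𝒩̃ homomorphisms of Banach L^0(𝕏)-modules. Then there exists a unique homomorphism of Banach L^0(𝕏)-modules T ⊗_π S : ℳ ⊗̂_π 𝒩 → ℳ̃ ⊗̂_π 𝒩̃ such that (T ⊗_π S)(v ⊗ w) = T(v) ⊗ S(w) for every v ∈ ℳ and w ∈ 𝒩; moreover its pointwise norm satisfies |T ⊗_π S| = |T||S|. -/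
/-!
The algebraic map `T ⊗ S` satisfies `|(T ⊗ S) α|_π ≤ g h |α|_π` for all bounds `g` of `T` and `h`
of `S` (apply `T` and `S` to each representation of `α`), so it extends by density and completeness
(`exists_extension`), uniquely (`eq_of_isHom_of_dense`), and the extension has norm at most
`|T| |S|`, since infima in `L⁰(𝕏)` commute with multiplication by nonnegative functions
(`le_mul_of_isGLB`).

The reverse inequality rests on the cross-norm identity `|v ⊗ w|_π = |v| |w|`. With it, a bound `u`
of `T ⊗_π S` satisfies `|T v| |S w| ≤ u |v| |w|` for all `v`, `w`, and two applications of
`mul_opNorm_le` give `|T| |S| ≤ u`. The nontrivial half of the identity (`le_pn_tmul`) follows from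
a functional `ω` with `|ω| ≤ 1` and `ω v = |v|`, used through the map `a ⊗ b ↦ ω a • b`. Such an `ω`
comes from a Hahn–Banach theorem for `L⁰(𝕏)`-modules (`IsSublin.exists_linear_le`): by Zorn's lemma
there is a minimal `L⁰(𝕏)`-sublinear map below a given one, and minimal sublinear maps are linear.
This uses Dedekind completeness of `L⁰(𝕏)` (`exists_isGLB`), obtained from the complete lattice of
measures and the Radon–Nikodym theorem.

Functions that are not invertible are handled by von Neumann regularity of `L⁰(𝕏)`
(`exists_quasiInv`), which keeps most arguments purely algebraic.
-/

open MeasureTheory Filter Set TensorProduct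

noncomputable section

namespace Paper

variable {X : Type*} [MeasurableSpace X]

/-! ### Order and algebra of `L⁰(𝕏)` -/

section L0

variable {μ : Measure X}

instance : IsOrderedRing (L0 μ) where
  add_le_add_left a b h c := by
    rw [← AEEqFun.coeFn_le] at h ⊢
    filter_upwards [h, AEEqFun.coeFn_add a c, AEEqFun.coeFn_add b c] with x hx h1 h2
    rw [h1, h2]
    exact add_le_add_left hx _
  zero_le_one := by
    rw [← AEEqFun.coeFn_le]
    filter_upwards [AEEqFun.coeFn_zero (α := X) (β := ℝ) (μ := μ),
      AEEqFun.coeFn_one (α := X) (β := ℝ) (μ := μ)] with x h1 h2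
    rw [h1, h2]
    exact zero_le_one
  mul_le_mul_of_nonneg_left a ha b c h := by
    rw [← AEEqFun.coeFn_le] at h ha ⊢
    filter_upwards [h, ha, AEEqFun.coeFn_zero (α := X) (β := ℝ) (μ := μ),
      AEEqFun.coeFn_mul a b, AEEqFun.coeFn_mul a c] with x hx hax h0 h1 h2
    rw [h0] at hax
    rw [h1, h2]
    exact mul_le_mul_of_nonneg_left hx hax
  mul_le_mul_of_nonneg_right a ha b c h := by
    rw [← AEEqFun.coeFn_le] at h ha ⊢
    filter_upwards [h, ha, AEEqFun.coeFn_zero (α := X) (β := ℝ) (μ := μ),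
      AEEqFun.coeFn_mul b a, AEEqFun.coeFn_mul c a] with x hx hax h0 h1 h2
    rw [h0] at hax
    rw [h1, h2]
    exact mul_le_mul_of_nonneg_right hx hax

/-- `L⁰(𝕏)` is von Neumann regular: every `f ≥ 0` has a quasi-inverse `j`, the function equal to
`1 / f` on `{f ≠ 0}` and to `0` elsewhere, so that `f * j` is the indicator of `{f ≠ 0}`. -/
lemma exists_quasiInv (f : L0 μ) (hf : 0 ≤ f) :
    ∃ j : L0 μ, 0 ≤ j ∧ f * j * f = f ∧ f * j ≤ 1 := by
  have hj := AEEqFun.coeFn_compMeasurable (μ := μ) (fun t : ℝ => t⁻¹) measurable_inv f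
  set j := AEEqFun.compMeasurable (μ := μ) (fun t : ℝ => t⁻¹) measurable_inv f
  have h0 := AEEqFun.coeFn_zero (α := X) (β := ℝ) (μ := μ)
  have h1 := AEEqFun.coeFn_one (α := X) (β := ℝ) (μ := μ)
  refine ⟨j, ?_, ?_, ?_⟩
  · rw [← AEEqFun.coeFn_le] at hf ⊢
    filter_upwards [hf, hj, h0] with x hx hjx h0x
    rw [h0x] at hx ⊢
    rw [hjx]
    exact inv_nonneg.2 hx
  · apply AEEqFun.ext
    filter_upwards [hj, AEEqFun.coeFn_mul (f * j) f, AEEqFun.coeFn_mul f j] with x hjx h2 h3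
    rw [h2, Pi.mul_apply, h3, Pi.mul_apply, hjx]
    exact mul_inv_mul_cancel _
  · rw [← AEEqFun.coeFn_le]
    filter_upwards [hj, h1, AEEqFun.coeFn_mul f j] with x hjx h1x h3
    rw [h3, Pi.mul_apply, h1x, hjx]
    exact mul_inv_le_one

/-- Infima in `L⁰(𝕏)` are compatible with multiplication by `f ≥ 0`. -/
lemma le_mul_of_isGLB {s : Set (L0 μ)} {a b f : L0 μ} (ha : IsGLB s a) (hs : s.Nonempty)
    (hf : 0 ≤ f) (h : ∀ g ∈ s, b ≤ f * g) : b ≤ f * a := by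
  obtain ⟨j, hj, hfj, hj1⟩ := exists_quasiInv f hf
  have hc : 0 ≤ 1 - f * j := sub_nonneg.2 hj1
  have key : j * b + (1 - f * j) * a ≤ a := by
    refine ha.2 fun g hg => ?_
    calc j * b + (1 - f * j) * a ≤ j * (f * g) + (1 - f * j) * g := by
          gcongr
          · exact h g hg
          · exact ha.1 hg
      _ = g := by ring
  obtain ⟨g, hg⟩ := hs
  have h1 : (1 - f * j) * b ≤ 0 := by
    calc (1 - f * j) * b ≤ (1 - f * j) * (f * g) := by gcongr; exact h g hg
      _ = (f - f * j * f) * g := by ring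
      _ = 0 := by rw [hfj]; ring
  calc b = f * j * b + (1 - f * j) * b := by ring
    _ ≤ f * j * b + 0 := by gcongr
    _ = f * j * b + (f - f * j * f) * a := by rw [hfj]; ring
    _ = f * (j * b + (1 - f * j) * a) := by ring
    _ ≤ f * a := by gcongr

/-- Dedekind completeness of `L⁰(𝕏)`. The infimum of the measures `exp g · μ`, for `g ∈ s`,
in the complete lattice of measures has a Radon–Nikodym density with respect to `μ`, whose
logarithm is the infimum of `s`. -/
lemma exists_isGLB [SigmaFinite μ] (s : Set (L0 μ)) (hs : s.Nonempty) (hb : BddBelow s) :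
    ∃ a, IsGLB s a := by
  let D : L0 μ → X → ENNReal := fun g x => ENNReal.ofReal (Real.exp (g x))
  have hD : ∀ g, Measurable (D g) := fun g =>
    ENNReal.measurable_ofReal.comp (Real.measurable_exp.comp g.measurable)
  let ν : Measure X := sInf ((fun g => μ.withDensity (D g)) '' s)
  have hν : ∀ g ∈ s, ν ≤ μ.withDensity (D g) := fun g hg => sInf_le ⟨g, hg, rfl⟩
  obtain ⟨g₀, hg₀⟩ := hs
  obtain ⟨b₀, hb₀⟩ := hb
  have : SigmaFinite (μ.withDensity (D g₀)) :=
    SigmaFinite.withDensity_of_ne_top (ae_of_all _ fun x => ENNReal.ofReal_ne_top)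
  have : SigmaFinite ν := Measure.sigmaFinite_of_le _ (hν g₀ hg₀)
  have hac : ν ≪ μ :=
    (Measure.absolutelyContinuous_of_le (hν g₀ hg₀)).trans (withDensity_absolutelyContinuous _ _)
  have hd : μ.withDensity (ν.rnDeriv μ) = ν := Measure.withDensity_rnDeriv_eq _ _ hac
  have hdm : Measurable (ν.rnDeriv μ) := Measure.measurable_rnDeriv _ _
  have hle : ∀ {p q : X → ENNReal}, Measurable p → μ.withDensity p ≤ μ.withDensity q →
      p ≤ᵐ[μ] q := by
    intro p q hp h
    refine ae_le_of_forall_setLIntegral_le_of_sigmaFinite hp fun t ht _ => ?_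
    rw [← withDensity_apply _ ht, ← withDensity_apply _ ht]
    exact h t
  have hupper : ∀ g ∈ s, ν.rnDeriv μ ≤ᵐ[μ] D g := fun g hg =>
    hle hdm (by rw [hd]; exact hν g hg)
  have hlower : ∀ b ∈ lowerBounds s, D b ≤ᵐ[μ] ν.rnDeriv μ := by
    intro b hb
    refine hle (hD b) ?_
    rw [hd]
    refine le_sInf ?_
    rintro _ ⟨g, hg, rfl⟩
    refine withDensity_mono ?_
    have := hb hg
    rw [← AEEqFun.coeFn_le] at this
    filter_upwards [this] with x hx
    exact ENNReal.ofReal_le_ofReal (Real.exp_le_exp.2 hx)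
  have ham : Measurable fun x => Real.log (ν.rnDeriv μ x).toReal :=
    Real.measurable_log.comp hdm.ennreal_toReal
  have ha := AEEqFun.coeFn_mk (μ := μ) _ ham.aestronglyMeasurable
  set a : L0 μ := AEEqFun.mk _ ham.aestronglyMeasurable
  -- The density lies between two densities of the form `exp`, hence is a.e. positive and finite.
  have hpos : ∀ᵐ x ∂μ, ν.rnDeriv μ x = ENNReal.ofReal (Real.exp (a x)) := by
    filter_upwards [hlower b₀ hb₀, hupper g₀ hg₀, ha] with x h1 h2 h3
    have hne : ν.rnDeriv μ x ≠ ⊤ := ne_top_of_le_ne_top ENNReal.ofReal_ne_top h2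
    have h0 : 0 < ν.rnDeriv μ x :=
      lt_of_lt_of_le (ENNReal.ofReal_pos.2 (Real.exp_pos _)) h1
    rw [h3, Real.exp_log (ENNReal.toReal_pos h0.ne' hne), ENNReal.ofReal_toReal hne]
  refine ⟨a, fun g hg => ?_, fun b hb => ?_⟩
  · rw [← AEEqFun.coeFn_le]
    filter_upwards [hpos, hupper g hg] with x h1 h2
    rw [h1] at h2
    exact Real.exp_le_exp.1 ((ENNReal.ofReal_le_ofReal_iff (Real.exp_pos _).le).1 h2)
  · rw [← AEEqFun.coeFn_le]
    filter_upwards [hpos, hlower b hb] with x h1 h2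
    rw [h1] at h2
    exact Real.exp_le_exp.1 ((ENNReal.ofReal_le_ofReal_iff (Real.exp_pos _).le).1 h2)

end L0

/-! ### The distance of convergence in measure -/

section Dist

variable {μ : Measure X} [SFinite μ]

lemma dL0_zero_eq (f : L0 μ) : dL0 μ f 0 = ∫ x, min |f x| 1 ∂μ.toFinite := by
  refine integral_congr_ae ?_
  have h0 := AEEqFun.coeFn_zero (α := X) (β := ℝ) (μ := μ)
  rw [EventuallyEq, ← ae_toFinite] at h0
  filter_upwards [h0] with x hx
  rw [hx, Pi.zero_apply, sub_zero]

lemma integrable_min_abs (f : L0 μ) : Integrable (fun x => min |f x| 1) μ.toFinite := by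
  refine Integrable.of_bound (C := 1)
    ((f.measurable.norm.min measurable_const).aestronglyMeasurable) (ae_of_all _ fun x => ?_)
  rw [Real.norm_eq_abs, abs_of_nonneg (le_min (abs_nonneg _) zero_le_one)]
  exact min_le_right _ _

lemma dL0_nonneg (f : L0 μ) : 0 ≤ dL0 μ f 0 := by
  rw [dL0_zero_eq]
  exact integral_nonneg fun x => le_min (abs_nonneg _) zero_le_one

lemma ae_nonneg {f : L0 μ} (hf : 0 ≤ f) : ∀ᵐ x ∂μ.toFinite, 0 ≤ f x := by
  rw [← AEEqFun.coeFn_le] at hf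
  rw [ae_toFinite]
  filter_upwards [hf, AEEqFun.coeFn_zero (α := X) (β := ℝ) (μ := μ)] with x hx h0
  rwa [h0] at hx

lemma dL0_mono {f g : L0 μ} (hf : 0 ≤ f) (h : f ≤ g) : dL0 μ f 0 ≤ dL0 μ g 0 := by
  rw [dL0_zero_eq, dL0_zero_eq]
  refine integral_mono_ae (integrable_min_abs f) (integrable_min_abs g) ?_
  have h' := AEEqFun.coeFn_le.2 h
  rw [EventuallyLE, ← ae_toFinite] at h'
  filter_upwards [ae_nonneg hf, h'] with x h1 h2
  exact min_le_min_right _ (abs_le_abs_of_nonneg h1 h2)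

lemma dL0_add_le (f g : L0 μ) : dL0 μ (f + g) 0 ≤ dL0 μ f 0 + dL0 μ g 0 := by
  rw [dL0_zero_eq, dL0_zero_eq, dL0_zero_eq,
    ← integral_add (integrable_min_abs f) (integrable_min_abs g)]
  refine integral_mono_ae (integrable_min_abs _)
    ((integrable_min_abs f).add (integrable_min_abs g)) ?_
  have h' := AEEqFun.coeFn_add f g
  rw [EventuallyEq, ← ae_toFinite] at h'
  filter_upwards [h'] with x hx
  rw [hx, Pi.add_apply]
  have := abs_add_le (f x) (g x)
  have hf := abs_nonneg (f x)
  have hg := abs_nonneg (g x)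
  rcases le_total |f x| 1 with h1 | h1 <;> rcases le_total |g x| 1 with h2 | h2 <;>
    simp only [h1, h2, min_eq_left, min_eq_right] <;>
    first
    | exact (min_le_left _ _).trans (by linarith)
    | exact (min_le_right _ _).trans (by linarith)

/-- Multiplication by a fixed `k` is continuous at `0` for convergence in measure: outside a set of
small measure `k` is bounded. -/
lemma dL0_mul_lt (k : L0 μ) {ε : ℝ} (hε : 0 < ε) :
    ∃ δ > 0, ∀ f : L0 μ, dL0 μ f 0 < δ → dL0 μ (k * f) 0 < ε := by
  have hmeas : ∀ n : ℕ, MeasurableSet {x | (n : ℝ) < |k x|} := fun n =>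
    measurableSet_lt measurable_const k.measurable.norm
  have hlim : Tendsto (fun n : ℕ => μ.toFinite {x | (n : ℝ) < |k x|}) atTop (nhds 0) := by
    have := tendsto_measure_iInter_atTop (μ := μ.toFinite) (s := fun n : ℕ => {x | (n : ℝ) < |k x|})
      (fun n => (hmeas n).nullMeasurableSet)
      (fun m n hmn x (hx : (n : ℝ) < |k x|) => lt_of_le_of_lt (Nat.cast_le.2 hmn) hx)
      ⟨0, measure_ne_top _ _⟩
    have hempty : ⋂ n : ℕ, {x | (n : ℝ) < |k x|} = ∅ := by
      ext x
      simp only [mem_iInter, mem_ofPred_eq, mem_empty_iff_false, iff_false, not_forall, not_lt]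
      exact exists_nat_ge _
    rwa [hempty, measure_empty] at this
  obtain ⟨n, hn⟩ := (hlim.eventually (gt_mem_nhds (ENNReal.ofReal_pos.2 (half_pos hε)))).exists
  have hn' : μ.toFinite.real {x | (n : ℝ) < |k x|} < ε / 2 := by
    rw [Measure.real]
    exact (ENNReal.lt_ofReal_iff_toReal_lt (measure_ne_top _ _)).1 hn
  have hn1 : (0 : ℝ) < n + 1 := by positivity
  refine ⟨ε / 2 / (n + 1), by positivity, fun f hf => ?_⟩
  have hint : Integrable ({x | (n : ℝ) < |k x|}.indicator fun _ => (1 : ℝ)) μ.toFinite :=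
    (integrable_const _).indicator (hmeas n)
  have hint2 := (integrable_min_abs f).const_mul ((n : ℝ) + 1)
  have hle : dL0 μ (k * f) 0 ≤
      μ.toFinite.real {x | (n : ℝ) < |k x|} + (n + 1) * dL0 μ f 0 := by
    rw [dL0_zero_eq, dL0_zero_eq, ← integral_const_mul, ← integral_indicator_one (hmeas n)]
    change _ ≤ ∫ x, ({x | (n : ℝ) < |k x|}.indicator fun _ => (1 : ℝ)) x ∂_ + _
    rw [← integral_add hint hint2]
    refine integral_mono_ae (integrable_min_abs _) (hint.add hint2) ?_
    have h' := AEEqFun.coeFn_mul k f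
    rw [EventuallyEq, ← ae_toFinite] at h'
    filter_upwards [h'] with x hx
    have hf0 := abs_nonneg (f x)
    have hm : 0 ≤ min |f x| 1 := le_min hf0 zero_le_one
    rw [hx, Pi.mul_apply, abs_mul, Set.indicator_apply]
    split_ifs with hk
    · exact (min_le_right _ _).trans (le_add_of_nonneg_right (by positivity))
    · rw [zero_add]
      have hk' : |k x| ≤ n := not_lt.1 hk
      rcases le_total |f x| 1 with h1 | h1
      · rw [min_eq_left h1]
        exact (min_le_left _ _).trans (by gcongr; linarith)
      · rw [min_eq_right h1]
        exact (min_le_right _ _).trans (by have := Nat.cast_nonneg (α := ℝ) n; linarith)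
  have := (lt_div_iff₀' hn1).1 hf
  linarith

lemma eq_zero_of_dL0_eq_zero {f : L0 μ} (h : dL0 μ f 0 = 0) : f = 0 := by
  rw [dL0_zero_eq, integral_eq_zero_iff_of_nonneg
    (fun x => le_min (abs_nonneg _) zero_le_one) (integrable_min_abs f), EventuallyEq,
    ae_toFinite] at h
  apply AEEqFun.ext
  filter_upwards [h, AEEqFun.coeFn_zero (α := X) (β := ℝ) (μ := μ)] with x hx h0
  rw [h0]
  simp only [Pi.zero_apply] at hx ⊢
  rcases min_choice |f x| 1 with h1 | h1
  · exact abs_eq_zero.1 (h1.symm.trans hx)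
  · rw [h1] at hx
    exact absurd hx one_ne_zero

/-- An element of `L⁰(𝕏)` dominated by nonnegative elements arbitrarily close to `0` is `≤ 0`. -/
lemma nonpos_of_forall_dL0_lt {r : L0 μ}
    (h : ∀ ε : ℝ, 0 < ε → ∃ s : L0 μ, 0 ≤ s ∧ r ≤ s ∧ dL0 μ s 0 < ε) : r ≤ 0 := by
  have h0 : r ⊔ 0 = 0 := by
    refine eq_zero_of_dL0_eq_zero (le_antisymm (le_of_forall_pos_lt_add fun ε hε => ?_)
      (dL0_nonneg _))
    obtain ⟨s, hs0, hrs, hs⟩ := h ε hε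
    rw [zero_add]
    exact (dL0_mono le_sup_right (sup_le hrs hs0)).trans_lt hs
  exact le_sup_left.trans h0.le

end Dist

/-! ### Pointwise norms -/

section Norm

variable {μ : Measure X} [SFinite μ]
variable {M : Type*} [AddCommGroup M] [Module (L0 μ) M] [BanachMod μ M]

lemma pn_nonneg (v : M) : 0 ≤ pn μ v := BanachMod.pn_nonneg v

lemma pn_add_le (v w : M) : pn μ (v + w) ≤ pn μ v + pn μ w := BanachMod.pn_add_le v w

lemma pn_smul (f : L0 μ) (v : M) : pn μ (f • v) = |f| * pn μ v := BanachMod.pn_smul f v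

lemma pn_zero : pn μ (0 : M) = 0 := (BanachMod.pn_eq_zero 0).2 rfl

lemma pn_smul_of_nonneg {f : L0 μ} (hf : 0 ≤ f) (v : M) : pn μ (f • v) = f * pn μ v := by
  rw [pn_smul, abs_of_nonneg hf]

lemma pn_neg (v : M) : pn μ (-v) = pn μ v := by
  have := pn_smul (μ := μ) (-1) v
  rwa [neg_smul, one_smul, abs_neg, abs_of_nonneg zero_le_one, one_mul] at this

lemma pn_sub_comm (v w : M) : pn μ (v - w) = pn μ (w - v) := by
  rw [← pn_neg, neg_sub]

lemma pn_sub_le (u v w : M) : pn μ (u - w) ≤ pn μ (u - v) + pn μ (v - w) := by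
  have := pn_add_le (μ := μ) (u - v) (v - w)
  rwa [sub_add_sub_cancel] at this

lemma eq_zero_of_pn_nonpos {v : M} (h : pn μ v ≤ 0) : v = 0 :=
  (BanachMod.pn_eq_zero v).1 (le_antisymm h (pn_nonneg v))

lemma pn_sum_le {ι : Type*} (s : Finset ι) (v : ι → M) :
    pn μ (∑ i ∈ s, v i) ≤ ∑ i ∈ s, pn μ (v i) := by
  classical
  induction s using Finset.induction_on with
  | empty => simp [pn_zero]
  | insert a s ha ih =>
    rw [Finset.sum_insert ha, Finset.sum_insert ha]
    exact (pn_add_le _ _).trans (by gcongr)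

end Norm

/-! ### The Hahn–Banach theorem for `L⁰(𝕏)`-modules -/

section HahnBanach

variable {μ : Measure X} {M : Type*} [AddCommGroup M] [Module (L0 μ) M]

/-- `L⁰(𝕏)`-sublinear maps `M → L⁰(𝕏)`. Positive homogeneity is required only as an inequality;
equality is automatic, see `IsSublin.mul_le`. -/
structure IsSublin (p : M → L0 μ) : Prop where
  add_le : ∀ u w, p (u + w) ≤ p u + p w
  smul_le : ∀ f : L0 μ, 0 ≤ f → ∀ u, p (f • u) ≤ f * p u

lemma IsSublin.map_zero {p : M → L0 μ} (hp : IsSublin p) : p 0 = 0 := by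
  refine le_antisymm ?_ ?_
  · simpa using hp.smul_le 0 le_rfl 0
  · simpa using hp.add_le 0 0

lemma IsSublin.neg_le {p : M → L0 μ} (hp : IsSublin p) (u : M) : -p (-u) ≤ p u := by
  have := hp.add_le u (-u)
  rw [add_neg_cancel, hp.map_zero] at this
  exact neg_le_iff_add_nonneg.2 this

/-- The reverse inequality in positive homogeneity. -/
lemma IsSublin.mul_le {p : M → L0 μ} (hp : IsSublin p) {f : L0 μ} (hf : 0 ≤ f) (u : M) :
    f * p u ≤ p (f • u) := by
  obtain ⟨j, hj, hfj, hj1⟩ := exists_quasiInv f hf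
  have hc : 0 ≤ 1 - f * j := sub_nonneg.2 hj1
  have h1 : p u ≤ j * p (f • u) + (1 - f * j) * p u := by
    calc p u = p (j • f • u + (1 - f * j) • u) := by
          congr 1
          rw [smul_smul, ← add_smul]
          ring_nf
          rw [one_smul]
      _ ≤ _ := (hp.add_le _ _).trans (add_le_add (hp.smul_le _ hj _) (hp.smul_le _ hc _))
  have h2 : 0 ≤ (1 - f * j) * p (f • u) := by
    refine le_trans (le_of_eq ?_) (hp.smul_le _ hc _)
    rw [smul_smul, show (1 - f * j) * f = f - f * j * f by ring, hfj, sub_self, zero_smul,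
      hp.map_zero]
  calc f * p u ≤ f * (j * p (f • u) + (1 - f * j) * p u) := by gcongr
    _ = f * j * p (f • u) + (f - f * j * f) * p u := by ring
    _ = f * j * p (f • u) + 0 := by rw [hfj]; ring
    _ ≤ f * j * p (f • u) + (1 - f * j) * p (f • u) := by gcongr
    _ = p (f • u) := by ring

/-- Given a sublinear `p` and a vector `x`, the map `u ↦ ⋀_{f ≥ 0} (p (u + f x) - f p x)` is a
smaller sublinear map; its value at `u` is at most `p (u + x) - p x`. -/
lemma IsSublin.exists_le [SigmaFinite μ] {p : M → L0 μ} (hp : IsSublin p) (x : M) :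
    ∃ q : M → L0 μ, IsSublin q ∧ (∀ u, q u ≤ p u) ∧ ∀ u, q u ≤ p (u + x) - p x := by
  have hex : ∀ u, ∃ a, IsGLB {g | ∃ f : L0 μ, 0 ≤ f ∧ g = p (u + f • x) - f * p x} a := by
    intro u
    refine exists_isGLB _ ⟨_, 0, le_rfl, rfl⟩ ⟨-p (-u), ?_⟩
    rintro _ ⟨f, hf, rfl⟩
    have h1 := hp.smul_le f hf x
    have h2 := hp.mul_le hf x
    have h3 := hp.add_le (u + f • x) (-u)
    rw [add_neg_cancel_comm] at h3
    rw [neg_le_sub_iff_le_add]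
    exact h2.trans (by rwa [add_comm] at h3 ⊢)
  choose q hq using hex
  have hqle : ∀ u (f : L0 μ), 0 ≤ f → q u ≤ p (u + f • x) - f * p x := fun u f hf =>
    (hq u).1 ⟨f, hf, rfl⟩
  refine ⟨q, ⟨fun u w => ?_, fun f hf u => ?_⟩, fun u => ?_, fun u => ?_⟩
  · rw [← sub_le_iff_le_add]
    refine (hq u).2 ?_
    rintro _ ⟨f, hf, rfl⟩
    rw [sub_le_comm]
    refine (hq w).2 ?_
    rintro _ ⟨g, hg, rfl⟩
    rw [sub_le_iff_le_add]
    calc q (u + w) ≤ p (u + w + (f + g) • x) - (f + g) * p x := hqle _ _ (add_nonneg hf hg)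
      _ = p ((u + f • x) + (w + g • x)) - (f + g) * p x := by
          congr 2
          rw [add_smul]
          abel
      _ ≤ (p (u + f • x) + p (w + g • x)) - (f + g) * p x := by
          gcongr
          exact hp.add_le _ _
      _ = _ := by ring
  · refine le_mul_of_isGLB (hq u) ⟨_, 0, le_rfl, rfl⟩ hf ?_
    rintro _ ⟨g, hg, rfl⟩
    calc q (f • u) ≤ p (f • u + (f * g) • x) - (f * g) * p x := hqle _ _ (mul_nonneg hf hg)
      _ = p (f • (u + g • x)) - (f * g) * p x := by rw [smul_add, smul_smul]
      _ ≤ f * p (u + g • x) - (f * g) * p x := by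
          gcongr
          exact hp.smul_le _ hf _
      _ = _ := by ring
  · simpa using hqle u 0 le_rfl
  · simpa using hqle u 1 zero_le_one

/-- Hahn–Banach: every sublinear map dominates an `L⁰(𝕏)`-linear one, namely a minimal sublinear
map below it. -/
lemma IsSublin.exists_linear_le [SigmaFinite μ] {p : M → L0 μ} (hp : IsSublin p) :
    ∃ ω : M →ₗ[L0 μ] L0 μ, ∀ u, ω u ≤ p u := by
  obtain ⟨m, -, ⟨hm, hmp⟩, hmin⟩ := zorn_le_nonempty₀ (α := (M → L0 μ)ᵒᵈ)
    {q | IsSublin (OrderDual.ofDual q) ∧ ∀ u, OrderDual.ofDual q u ≤ p u} (by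
      intro c hc hchain y hy
      let c' : Set (M → L0 μ) := OrderDual.toDual ⁻¹' c
      have hc' : ∀ q ∈ c', IsSublin q ∧ ∀ u, q u ≤ p u := fun q hq => hc hq
      have htot : ∀ q ∈ c', ∀ r ∈ c', q ≤ r ∨ r ≤ q := fun q hq r hr => (hchain.total hq hr).symm
      have hex : ∀ u, ∃ a, IsGLB ((fun q : M → L0 μ => q u) '' c') a := by
        intro u
        refine exists_isGLB _ ⟨_, OrderDual.ofDual y, hy, rfl⟩ ⟨-p (-u), ?_⟩
        rintro _ ⟨q, hq, rfl⟩
        exact (neg_le_neg ((hc' q hq).2 _)).trans ((hc' q hq).1.neg_le u)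
      choose a ha using hex
      have hale : ∀ q ∈ c', ∀ u, a u ≤ q u := fun q hq u => (ha u).1 ⟨q, hq, rfl⟩
      refine ⟨OrderDual.toDual a, ⟨⟨fun u w => ?_, fun f hf u => ?_⟩, fun u => ?_⟩, ?_⟩
      · change a (u + w) ≤ a u + a w
        rw [← sub_le_iff_le_add]
        refine (ha u).2 ?_
        rintro _ ⟨q, hq, rfl⟩
        rw [sub_le_comm]
        refine (ha w).2 ?_
        rintro _ ⟨r, hr, rfl⟩
        change a (u + w) - q u ≤ r w
        rw [sub_le_iff_le_add']
        rcases htot q hq r hr with h | h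
        · exact (hale q hq _).trans (((hc' q hq).1.add_le _ _).trans (by gcongr; exact h w))
        · exact (hale r hr _).trans (((hc' r hr).1.add_le _ _).trans (by gcongr; exact h u))
      · refine le_mul_of_isGLB (ha u) ⟨_, OrderDual.ofDual y, hy, rfl⟩ hf ?_
        rintro _ ⟨q, hq, rfl⟩
        exact (hale q hq _).trans ((hc' q hq).1.smul_le f hf u)
      · exact (hale _ hy u).trans ((hc' _ hy).2 u)
      · intro z hz u
        exact hale (OrderDual.ofDual z) hz u)
    (OrderDual.toDual p) ⟨hp, fun u => le_rfl⟩
  set m' : M → L0 μ := OrderDual.ofDual m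
  -- By minimality, `m'` coincides with each of its modifications, so it is superadditive.
  have hsup : ∀ u x, m' u + m' x ≤ m' (u + x) := by
    intro u x
    obtain ⟨q, hq, hqm, hqx⟩ := hm.exists_le x
    have : m' ≤ q := hmin (y := OrderDual.toDual q) ⟨hq, fun u => (hqm u).trans (hmp u)⟩ hqm
    exact le_sub_iff_add_le.1 ((this u).trans (hqx u))
  have hadd : ∀ u x, m' (u + x) = m' u + m' x := fun u x => le_antisymm (hm.add_le u x) (hsup u x)
  have hneg : ∀ u, m' (-u) = -m' u := by
    intro u
    have := hadd (-u) u
    rw [neg_add_cancel, hm.map_zero] at this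
    exact eq_neg_of_add_eq_zero_left this.symm
  have hpos : ∀ f : L0 μ, 0 ≤ f → ∀ u, m' (f • u) = f * m' u := fun f hf u =>
    le_antisymm (hm.smul_le f hf u) (hm.mul_le hf u)
  refine ⟨{ toFun := m', map_add' := hadd, map_smul' := fun f u => ?_ }, hmp⟩
  have hsplit : f = (f ⊔ 0) - (-f ⊔ 0) := (posPart_sub_negPart f).symm
  have h1 : m' (f • u) = m' ((f ⊔ 0) • u + -((-f ⊔ 0) • u)) := by
    congr 1
    rw [← sub_eq_add_neg, ← sub_smul, ← hsplit]
  rw [h1, hadd, hneg, hpos _ le_sup_right, hpos _ le_sup_right, RingHom.id_apply, smul_eq_mul]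
  conv_rhs => rw [hsplit]
  ring

/-- Norming functionals: for each `v` there is `ω` in the unit disc of the dual with
`ω v = |v|`. -/
lemma exists_norming [SigmaFinite μ] [BanachMod μ M] (v : M) :
    ∃ ω : M →ₗ[L0 μ] L0 μ, InDualDisc μ ω ∧ ω v = pn μ v := by
  have hpn : IsSublin (pn μ : M → L0 μ) :=
    ⟨pn_add_le, fun f hf u => (pn_smul_of_nonneg hf u).le⟩
  obtain ⟨q, hq, hqp, hqv⟩ := hpn.exists_le v
  obtain ⟨ω, hω⟩ := hq.exists_linear_le
  have hle : ∀ u, ω u ≤ pn μ u := fun u => (hω u).trans (hqp u)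
  refine ⟨ω, fun u => abs_le'.2 ⟨hle u, ?_⟩, le_antisymm (hle v) ?_⟩
  · rw [← map_neg, ← pn_neg]
    exact hle (-u)
  · have := (hω (-v)).trans (hqv (-v))
    rw [neg_add_cancel, pn_zero, zero_sub, map_neg] at this
    exact neg_le_neg_iff.1 this

end HahnBanach

/-! ### Projective tensor products and extension by density -/

section Tensor

variable {μ : Measure X}
variable {M : Type*} [AddCommGroup M] [Module (L0 μ) M]
  {N : Type*} [AddCommGroup N] [Module (L0 μ) N]
  {M' : Type*} [AddCommGroup M'] [Module (L0 μ) M']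
  {N' : Type*} [AddCommGroup N'] [Module (L0 μ) N']
  {P : Type*} [AddCommGroup P] [Module (L0 μ) P]
  {P' : Type*} [AddCommGroup P'] [Module (L0 μ) P']

lemma piReps_nonempty [SFinite μ] [BanachMod μ M] [BanachMod μ N] (α : M ⊗[L0 μ] N) :
    (piReps μ α).Nonempty := by
  obtain ⟨s, hs⟩ := TensorProduct.exists_finset α
  refine ⟨_, s.card, fun i => (s.equivFin.symm i).1.1, fun i => (s.equivFin.symm i).1.2, ?_, rfl⟩
  rw [hs, ← Finset.sum_coe_sort s (fun i => i.1 ⊗ₜ[L0 μ] i.2)]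
  exact (Equiv.sum_comp s.equivFin.symm (fun i => i.1.1 ⊗ₜ[L0 μ] i.1.2)).symm

lemma pn_tmul_le [SFinite μ] [BanachMod μ M] [BanachMod μ N] [BanachMod μ P]
    {e : M ⊗[L0 μ] N →ₗ[L0 μ] P} (hP : IsPiTensor μ M N P e) (v : M) (w : N) :
    pn μ (e (v ⊗ₜ[L0 μ] w)) ≤ pn μ v * pn μ w :=
  (hP.pn_emb _).1 ⟨1, fun _ => v, fun _ => w, by simp, by simp⟩

/-- The cross-norm inequality `|v| |w| ≤ |v ⊗ w|_π`. For a norming functional `ω` of `v`, the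
linear map `a ⊗ b ↦ ω a • b` sends `v ⊗ w` to `|v| • w` and is bounded by `|·|_π`. -/
lemma le_pn_tmul [SigmaFinite μ] [BanachMod μ M] [BanachMod μ N] [BanachMod μ P]
    {e : M ⊗[L0 μ] N →ₗ[L0 μ] P} (hP : IsPiTensor μ M N P e) (v : M) (w : N) :
    pn μ v * pn μ w ≤ pn μ (e (v ⊗ₜ[L0 μ] w)) := by
  obtain ⟨ω, hω, hv⟩ := exists_norming (μ := μ) v
  refine (hP.pn_emb _).2 ?_
  rintro _ ⟨n, a, b, hab, rfl⟩
  let B : M ⊗[L0 μ] N →ₗ[L0 μ] N :=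
    TensorProduct.lift ((LinearMap.lsmul (L0 μ) N).comp ω)
  have hB : ∀ (a : M) (b : N), B (a ⊗ₜ[L0 μ] b) = ω a • b := fun a b => by
    simp [B]
  have h := congrArg B hab
  rw [hB, map_sum, hv] at h
  rw [← pn_smul_of_nonneg (pn_nonneg v), h]
  refine (pn_sum_le _ _).trans (Finset.sum_le_sum fun i _ => ?_)
  rw [hB, pn_smul]
  exact mul_le_mul_of_nonneg_right (hω _) (pn_nonneg _)

lemma pn_map_le [SFinite μ] [BanachMod μ M] [BanachMod μ N] [BanachMod μ M'] [BanachMod μ N']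
    [BanachMod μ P] [BanachMod μ P']
    {e : M ⊗[L0 μ] N →ₗ[L0 μ] P} (hP : IsPiTensor μ M N P e)
    {e' : M' ⊗[L0 μ] N' →ₗ[L0 μ] P'} (hP' : IsPiTensor μ M' N' P' e')
    {T : M →ₗ[L0 μ] M'} {S : N →ₗ[L0 μ] N'} {g h : L0 μ}
    (hg : g ∈ homBddSet μ ⇑T) (hh : h ∈ homBddSet μ ⇑S) (α : M ⊗[L0 μ] N) :
    pn μ (e' (TensorProduct.map T S α)) ≤ g * h * pn μ (e α) := by
  refine le_mul_of_isGLB (hP.pn_emb α) (piReps_nonempty α) (mul_nonneg hg.1 hh.1) ?_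
  rintro _ ⟨n, v, w, rfl, rfl⟩
  calc pn μ (e' (TensorProduct.map T S (∑ i, v i ⊗ₜ[L0 μ] w i)))
      = pn μ (∑ i, e' (T (v i) ⊗ₜ[L0 μ] S (w i))) := by
        simp only [map_sum, TensorProduct.map_tmul]
    _ ≤ ∑ i, pn μ (T (v i)) * pn μ (S (w i)) :=
        (pn_sum_le _ _).trans (Finset.sum_le_sum fun i _ => pn_tmul_le hP' _ _)
    _ ≤ ∑ i, (g * pn μ (v i)) * (h * pn μ (w i)) :=
        Finset.sum_le_sum fun i _ => mul_le_mul (hg.2 _) (hh.2 _) (pn_nonneg _)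
          (mul_nonneg hg.1 (pn_nonneg _))
    _ = g * h * ∑ i, pn μ (v i) * pn μ (w i) := by
        rw [Finset.mul_sum]
        exact Finset.sum_congr rfl fun i _ => by ring

/-- If `a |T v| ≤ c |v|` for all `v`, then `a |T| ≤ c`: the function equal to `c / a` on `{a ≠ 0}`
and to some given bound of `T` elsewhere is again a bound of `T`. -/
lemma mul_opNorm_le [SFinite μ] [BanachMod μ M] [BanachMod μ M']
    {T : M →ₗ[L0 μ] M'} (hT : IsHom μ T) {t a c : L0 μ} (ht : IsGLB (homBddSet μ ⇑T) t)
    (ha : 0 ≤ a) (hc : 0 ≤ c) (h : ∀ v, a * pn μ (T v) ≤ c * pn μ v) : a * t ≤ c := by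
  obtain ⟨g, hg0, hg⟩ := hT
  obtain ⟨j, hj, haj, hj1⟩ := exists_quasiInv a ha
  have hd : 0 ≤ 1 - a * j := sub_nonneg.2 hj1
  have hmem : j * c + (1 - a * j) * g ∈ homBddSet μ ⇑T := by
    refine ⟨by positivity, fun v => ?_⟩
    calc pn μ (T v) = j * (a * pn μ (T v)) + (1 - a * j) * pn μ (T v) := by ring
      _ ≤ j * (c * pn μ v) + (1 - a * j) * (g * pn μ v) := by
          exact add_le_add (mul_le_mul_of_nonneg_left (h v) hj)
            (mul_le_mul_of_nonneg_left (hg v) hd)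
      _ = _ := by ring
  calc a * t ≤ a * (j * c + (1 - a * j) * g) := by
        gcongr
        exact ht.1 hmem
    _ = a * j * c + (a - a * j * a) * g := by ring
    _ = a * j * c := by rw [haj]; ring
    _ ≤ 1 * c := by gcongr
    _ = c := one_mul c

lemma eq_of_isHom_of_dense [SFinite μ] [BanachMod μ P] [BanachMod μ P']
    {e : M →ₗ[L0 μ] P} (hd : ∀ p : P, ∀ ε : ℝ, 0 < ε → ∃ α, dM μ (e α) p < ε)
    {F G : P →ₗ[L0 μ] P'} (hF : IsHom μ F) (hG : IsHom μ G) (h : ∀ α, F (e α) = G (e α)) :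
    F = G := by
  obtain ⟨f, hf0, hf⟩ := hF
  obtain ⟨g, hg0, hg⟩ := hG
  ext p
  refine sub_eq_zero.1 (eq_zero_of_pn_nonpos (μ := μ) (nonpos_of_forall_dL0_lt fun ε hε => ?_))
  obtain ⟨δ, hδ, hmul⟩ := dL0_mul_lt (f + g) hε
  obtain ⟨α, hα⟩ := hd p δ hδ
  refine ⟨_, mul_nonneg (add_nonneg hf0 hg0) (pn_nonneg (e α - p)), ?_, hmul _ hα⟩
  calc pn μ (F p - G p) ≤ pn μ (F p - F (e α)) + pn μ (F (e α) - G p) := pn_sub_le _ _ _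
    _ = pn μ (F (e α - p)) + pn μ (G (e α - p)) := by
        rw [pn_sub_comm, ← map_sub, h, ← map_sub]
    _ ≤ f * pn μ (e α - p) + g * pn μ (e α - p) := add_le_add (hf _) (hg _)
    _ = _ := by ring

/-- Extension by density and completeness: a linear `L` with `|L α| ≤ k |e α|` factors through the
closure `P` of the range of `e`, and every such bound `k` passes to the extension. The extension is
the linear map whose graph is the closure of `{(e α, L α)}`. -/
lemma exists_extension [SFinite μ] [BanachMod μ P] [BanachMod μ P']
    {e : M →ₗ[L0 μ] P} (hd : ∀ p : P, ∀ ε : ℝ, 0 < ε → ∃ α, dM μ (e α) p < ε)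
    (L : M →ₗ[L0 μ] P') {k₀ : L0 μ} (hk₀ : 0 ≤ k₀) (hL : ∀ α, pn μ (L α) ≤ k₀ * pn μ (e α)) :
    ∃ F : P →ₗ[L0 μ] P', (∀ α, F (e α) = L α) ∧
      ∀ k : L0 μ, 0 ≤ k → (∀ α, pn μ (L α) ≤ k * pn μ (e α)) →
        ∀ p, pn μ (F p) ≤ k * pn μ p := by
  let Γ : P → P' → Prop := fun p q => ∀ ε : ℝ, 0 < ε → ∃ α, dM μ (e α) p < ε ∧ dM μ (L α) q < ε
  have hΓe : ∀ α, Γ (e α) (L α) := fun α ε hε => ⟨α, by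
    have h0 : dL0 μ (0 : L0 μ) 0 = 0 := by simp [dL0]
    simp only [dM, sub_self, pn_zero, h0]
    exact ⟨hε, hε⟩⟩
  have hΓadd : ∀ p q p' q', Γ p q → Γ p' q' → Γ (p + p') (q + q') := by
    intro p q p' q' h h' ε hε
    obtain ⟨α, h1, h2⟩ := h (ε / 2) (half_pos hε)
    obtain ⟨β, h3, h4⟩ := h' (ε / 2) (half_pos hε)
    refine ⟨α + β, ?_, ?_⟩
    · have := (dL0_mono (pn_nonneg _) (pn_add_le (μ := μ) (e α - p) (e β - p'))).trans
        (dL0_add_le _ _)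
      rw [dM, map_add, add_sub_add_comm]
      rw [dM] at h1 h3
      linarith
    · have := (dL0_mono (pn_nonneg _) (pn_add_le (μ := μ) (L α - q) (L β - q'))).trans
        (dL0_add_le _ _)
      rw [dM, map_add, add_sub_add_comm]
      rw [dM] at h2 h4
      linarith
  have hΓsmul : ∀ (f : L0 μ) p q, Γ p q → Γ (f • p) (f • q) := by
    intro f p q h ε hε
    obtain ⟨δ, hδ, hmul⟩ := dL0_mul_lt |f| hε
    obtain ⟨α, h1, h2⟩ := h δ hδ
    refine ⟨f • α, ?_, ?_⟩
    · rw [dM, map_smul, ← smul_sub, pn_smul]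
      exact hmul _ h1
    · rw [dM, map_smul, ← smul_sub, pn_smul]
      exact hmul _ h2
  have hΓbdd : ∀ k : L0 μ, 0 ≤ k → (∀ α, pn μ (L α) ≤ k * pn μ (e α)) →
      ∀ p q, Γ p q → pn μ q ≤ k * pn μ p := by
    intro k hk hLk p q h
    rw [← sub_nonpos]
    refine nonpos_of_forall_dL0_lt fun ε hε => ?_
    obtain ⟨δ, hδ, hmul⟩ := dL0_mul_lt k (half_pos hε)
    obtain ⟨α, h1, h2⟩ := h (min δ (ε / 2)) (lt_min hδ (half_pos hε))
    refine ⟨pn μ (L α - q) + k * pn μ (e α - p),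
      add_nonneg (pn_nonneg _) (mul_nonneg hk (pn_nonneg _)), ?_, ?_⟩
    · rw [sub_le_iff_le_add]
      calc pn μ q ≤ pn μ (q - L α) + pn μ (L α) := by
            have := pn_add_le (μ := μ) (q - L α) (L α)
            rwa [sub_add_cancel] at this
        _ ≤ pn μ (L α - q) + k * (pn μ (e α - p) + pn μ p) := by
            rw [pn_sub_comm]
            gcongr
            refine (hLk α).trans ?_
            gcongr
            have := pn_add_le (μ := μ) (e α - p) p
            rwa [sub_add_cancel] at this
        _ = _ := by ring
    · have h3 := hmul _ (h1.trans_le (min_le_left _ _))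
      have h4 := h2.trans_le (min_le_right _ _)
      have h5 := dL0_add_le (pn μ (L α - q)) (k * pn μ (e α - p))
      rw [dM] at h4
      linarith
  have hΓuniq : ∀ p q q', Γ p q → Γ p q' → q = q' := by
    intro p q q' h h'
    have h1 := hΓadd _ _ _ _ h (hΓsmul (-1) _ _ h')
    have h2 := hΓbdd k₀ hk₀ hL _ _ h1
    simp only [neg_smul, one_smul, add_neg_cancel, pn_zero, mul_zero] at h2
    have := eq_zero_of_pn_nonpos h2
    rwa [← sub_eq_add_neg, sub_eq_zero] at this
  have hΓex : ∀ p, ∃ q, Γ p q := by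
    intro p
    have hseq : ∀ n : ℕ, ∃ α, dM μ (e α) p < 1 / ((n : ℝ) + 1) := fun n =>
      hd p _ Nat.one_div_pos_of_nat
    choose α hα using hseq
    have hsmall : ∀ δ : ℝ, 0 < δ → ∃ K : ℕ, ∀ n ≥ K, dM μ (e (α n)) p < δ := by
      intro δ hδ
      obtain ⟨K, hK⟩ := exists_nat_one_div_lt hδ
      exact ⟨K, fun n hn => (hα n).trans_le ((Nat.one_div_le_one_div hn).trans hK.le)⟩
    obtain ⟨q, hq⟩ := BanachMod.complete (μ := μ) (fun n => L (α n)) (by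
      intro ε hε
      obtain ⟨δ, hδ, hmul⟩ := dL0_mul_lt k₀ hε
      obtain ⟨K, hK⟩ := hsmall (δ / 2) (half_pos hδ)
      refine ⟨K, fun m hm n hn => ?_⟩
      have h1 : pn μ (L (α m) - L (α n)) ≤ k₀ * pn μ (e (α m) - e (α n)) := by
        rw [← map_sub, ← map_sub]
        exact hL _
      refine (dL0_mono (pn_nonneg _) h1).trans_lt (hmul _ ?_)
      have h2 := (dL0_mono (pn_nonneg _) (pn_sub_le (μ := μ) (e (α m)) p (e (α n)))).trans
        (dL0_add_le _ _)
      rw [pn_sub_comm p] at h2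
      have h3 := hK m hm
      have h4 := hK n hn
      rw [dM] at h3 h4
      linarith)
    refine ⟨q, fun ε hε => ?_⟩
    obtain ⟨K, hK⟩ := hsmall ε hε
    obtain ⟨n, h1, h2⟩ := ((hq.eventually (gt_mem_nhds hε)).and (eventually_ge_atTop K)).exists
    exact ⟨α n, hK n h2, h1⟩
  choose F hF using hΓex
  refine ⟨{ toFun := F
            map_add' := fun p p' => hΓuniq _ _ _ (hF _) (hΓadd _ _ _ _ (hF p) (hF p'))
            map_smul' := fun f p => hΓuniq _ _ _ (hF _) (hΓsmul f _ _ (hF p)) }, ?_, ?_⟩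
  · exact fun α => hΓuniq _ _ _ (hF _) (hΓe α)
  · exact fun k hk hLk p => hΓbdd k hk hLk _ _ (hF p)

end Tensor

/-- projective tensor product of homomorphisms. Let `T : ℳ → ℳ'` and
`S : 𝒩 → 𝒩'` be homomorphisms of Banach `L⁰(𝕏)`-modules. Then there exists a unique
homomorphism `T ⊗_π S : ℳ ⊗̂_π 𝒩 → ℳ' ⊗̂_π 𝒩'` with `(T ⊗_π S)(v ⊗ w) = T v ⊗ S w` for
all `v, w`; moreover `|T ⊗_π S| = |T||S|` (the pointwise norms being the infima of the
corresponding sets of admissible bounds). Here `P`, `P'` are realizations of the projective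
tensor products. -/
theorem projective_tensor_of_homs
    (μ : Measure X) [SigmaFinite μ]
    (M : Type*) [AddCommGroup M] [Module (L0 μ) M] [BanachMod μ M]
    (N : Type*) [AddCommGroup N] [Module (L0 μ) N] [BanachMod μ N]
    (M' : Type*) [AddCommGroup M'] [Module (L0 μ) M'] [BanachMod μ M']
    (N' : Type*) [AddCommGroup N'] [Module (L0 μ) N'] [BanachMod μ N']
    (P : Type*) [AddCommGroup P] [Module (L0 μ) P] [BanachMod μ P]
    (P' : Type*) [AddCommGroup P'] [Module (L0 μ) P'] [BanachMod μ P']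
    (e : M ⊗[L0 μ] N →ₗ[L0 μ] P) (hP : IsPiTensor μ M N P e)
    (e' : M' ⊗[L0 μ] N' →ₗ[L0 μ] P') (hP' : IsPiTensor μ M' N' P' e')
    (T : M →ₗ[L0 μ] M') (S : N →ₗ[L0 μ] N') (hT : IsHom μ T) (hS : IsHom μ S) :
    ∃ TS : P →ₗ[L0 μ] P',
      (IsHom μ TS ∧ ∀ (v : M) (w : N), TS (e (v ⊗ₜ[L0 μ] w)) = e' (T v ⊗ₜ[L0 μ] S w))
      ∧ (∀ TS' : P →ₗ[L0 μ] P', IsHom μ TS' →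
          (∀ (v : M) (w : N), TS' (e (v ⊗ₜ[L0 μ] w)) = e' (T v ⊗ₜ[L0 μ] S w)) → TS' = TS)
      ∧ (∀ tT tS tTS : L0 μ, IsGLB (homBddSet μ ⇑T) tT → IsGLB (homBddSet μ ⇑S) tS →
          IsGLB (homBddSet μ ⇑TS) tTS → tTS = tT * tS) := by
  obtain ⟨g₀, hg₀⟩ := hT
  obtain ⟨h₀, hh₀⟩ := hS
  obtain ⟨F, hFe, hFb⟩ := exists_extension hP.dense (e' ∘ₗ TensorProduct.map T S)
    (mul_nonneg hg₀.1 hh₀.1) (pn_map_le hP hP' hg₀ hh₀)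
  have hmem : ∀ g ∈ homBddSet μ ⇑T, ∀ h ∈ homBddSet μ ⇑S, g * h ∈ homBddSet μ ⇑F :=
    fun g hg h hh => ⟨mul_nonneg hg.1 hh.1,
      hFb _ (mul_nonneg hg.1 hh.1) (pn_map_le hP hP' hg hh)⟩
  have hF : IsHom μ F := ⟨_, hmem g₀ hg₀ h₀ hh₀⟩
  have hFt : ∀ (v : M) (w : N), F (e (v ⊗ₜ[L0 μ] w)) = e' (T v ⊗ₜ[L0 μ] S w) := fun v w => by
    simp [hFe]
  refine ⟨F, ⟨hF, hFt⟩, fun G hG hGt => ?_, fun tT tS tTS htT htS htTS => ?_⟩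
  · refine eq_of_isHom_of_dense hP.dense hG hF fun α => ?_
    induction α using TensorProduct.induction_on with
    | zero => simp
    | tmul v w => rw [hGt, hFt]
    | add a b ha hb => rw [map_add, map_add, map_add, ha, hb]
  · have htS0 : 0 ≤ tS := htS.2 fun h hh => hh.1
    have htT0 : 0 ≤ tT := htT.2 fun h hh => hh.1
    refine le_antisymm ?_ (htTS.2 fun u hu => ?_)
    · rw [mul_comm]
      refine le_mul_of_isGLB htT ⟨g₀, hg₀⟩ htS0 fun g hg => ?_
      rw [mul_comm]
      exact le_mul_of_isGLB htS ⟨h₀, hh₀⟩ hg.1 fun h hh => htTS.1 (hmem g hg h hh)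
    · have hu0 : 0 ≤ u := hu.1
      have key : ∀ v w, pn μ (T v) * pn μ (S w) ≤ u * (pn μ v * pn μ w) := fun v w =>
        calc pn μ (T v) * pn μ (S w) ≤ pn μ (F (e (v ⊗ₜ[L0 μ] w))) := by
              rw [hFt]
              exact le_pn_tmul hP' _ _
          _ ≤ u * pn μ (e (v ⊗ₜ[L0 μ] w)) := hu.2 _
          _ ≤ u * (pn μ v * pn μ w) := by
              gcongr
              exact pn_tmul_le hP v w
      refine mul_opNorm_le ⟨h₀, hh₀⟩ htS htT0 hu0 fun w => ?_
      rw [mul_comm]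
      refine mul_opNorm_le ⟨g₀, hg₀⟩ htT (pn_nonneg _) (mul_nonneg hu0 (pn_nonneg _)) fun v => ?_
      rw [mul_comm]
      exact (key v w).trans_eq (by ring)

end Paper
end
end
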